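/- Let ν be the unique invariant σ-finite measure of the chain Y, normalized by F_ν(x₀) = 1. Then there exist constants m_ζ > 0, c_ζ ∈ ℝ and ρ_ζ ∈ (0,1) such that F_ν(x) = m_ζ x + c_ζ + O(e^{−ρ_ζ x}) as x → ∞. -/

import Mathlib

open MeasureTheory ProbabilityTheory Real Filter Set
open scoped ENNReal

noncomputable def hkfun (k x : ℝ) : ℝ :=
  Real.log ((Real.exp (-k) + Real.exp x) / (1 + Real.exp (x - k)))

noncomputable def hY (y : ℝ) : ℝ := y + Real.log (1 + Real.exp (-y))

/-- A σ-finite measure ν is invariant for the chain Y_{n+1} = z_{n+1} + hY (Y_n),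
where the increments have density ζ. -/
def IsInvariantY (ζ : ℝ → ℝ) (ν : Measure ℝ) : Prop :=
  ∀ g : ℝ → ℝ≥0∞, Measurable g →
    ∫⁻ z, g z ∂ν = ∫⁻ y, ∫⁻ z, g (z + hY y) * ENNReal.ofReal (ζ z) ∂volume ∂ν

/-!
Write `l` for the law of the increments and `μ = ν.map h`, so that invariance reads `μ ∗ l = ν` and
`F_ν = l * F_μ` for the cumulative functions. Since `h y - max y 0` is exponentially small at `+∞`,
`F_ν` almost solves the renewal equation `l * F = F`.

The error is controlled by testing invariance against the function equal to `B` on `(-∞, 0]` and to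
`(B - y)⁺` beyond: a centred increment raises its mean only near its convex corner `B`, and
Grönwall's inequality in `B` gives `∫ exp (-η * h) dν < ∞`. With the bounded density of `l` this
makes `F_ν - F_μ`, hence `l * F_ν - F_ν`, of order `exp (-ρ * x)`.

Let `Φ'' = F_ν`, and let `κ` be the measure of Taylor's formula `l * Φ - Φ = κ * Φ''`. Integrating
`l * F_ν - F_ν` twice shows that `κ * F_ν` is affine up to `O(exp (-ρ * x))`. Subtract the
corresponding affine function from `F_ν`: the difference `D` has both `κ * D` and `l * D - D`
exponentially small. They control `D` itself: because `l` has a density, the `L²` increments of `D`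
along `l` control those along all translations, hence `‖D‖² ≤ K (‖κ * D‖² + ‖l * D - D‖²)` in `L²`
with weight `exp (-c * |x - R|)`. One more convolution with the bounded density of `l` makes the
bound pointwise.
-/

open Asymptotics
open scoped Topology

section ExponentialGrowth

theorem integrable_of_isBigO_top {α : Type*} [MeasurableSpace α] {μ : Measure α} {f g : α → ℝ}
    (hfg : f =O[⊤] g) (hf : AEStronglyMeasurable f μ) (hg : Integrable g μ) : Integrable f μ := by
  obtain ⟨C, hC⟩ := isBigO_top.1 hfg
  exact (hg.norm.const_mul C).mono' hf (ae_of_all _ hC)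

theorem isBigO_top_exp_iff {α : Type*} {f g : α → ℝ} :
    (f =O[⊤] fun x ↦ exp (g x)) ↔ ∃ C ≥ 0, ∀ x, |f x| ≤ C * exp (g x) := by
  simp only [isBigO_iff_isBigOWith, isBigOWith_top, norm_eq_abs, abs_exp]
  refine ⟨fun ⟨C, hC⟩ ↦ ⟨max C 0, le_max_right _ _, fun x ↦ (hC x).trans ?_⟩,
    fun ⟨C, _, hC⟩ ↦ ⟨C, hC⟩⟩
  gcongr
  exact le_max_left _ _

theorem integrable_exp_neg_mul_abs {c : ℝ} (hc : 0 < c) :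
    Integrable fun x : ℝ ↦ exp (-c * |x|) := by
  rw [← integrableOn_univ, ← Iic_union_Ioi (a := (0 : ℝ))]
  refine IntegrableOn.union ?_ ?_
  · refine (integrableOn_exp_mul_Iic hc 0).congr_fun (fun x hx ↦ ?_) measurableSet_Iic
    simp [abs_of_nonpos (mem_Iic.1 hx)]
  · refine (integrableOn_exp_mul_Ioi (neg_neg_of_pos hc) 0).congr_fun (fun x hx ↦ ?_)
      measurableSet_Ioi
    simp [abs_of_pos (mem_Ioi.1 hx)]

theorem exp_mul_abs_sub_le {b : ℝ} (hb : 0 ≤ b) (x z : ℝ) :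
    exp (b * |x - z|) ≤ exp (b * |z|) * exp (b * |x|) := by
  rw [← exp_add, ← mul_add]
  gcongr
  linarith [abs_sub x z]

theorem isBigO_top_exp_mul_abs_of_le {b b' : ℝ} (hb : b ≤ b') :
    (fun x : ℝ ↦ exp (b * |x|)) =O[⊤] fun x ↦ exp (b' * |x|) :=
  isBigO_top_exp_iff.2 ⟨1, zero_le_one, fun x ↦ by rw [abs_exp, one_mul]; gcongr⟩

theorem pow_isBigO_top_exp_mul_abs (n : ℕ) {b : ℝ} (hb : 0 < b) :
    (fun x : ℝ ↦ x ^ n) =O[⊤] fun x ↦ exp (b * |x|) := by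
  refine isBigO_top_exp_iff.2 ⟨n.factorial / b ^ n, by positivity, fun x ↦ ?_⟩
  have h := pow_div_factorial_le_exp (b * |x|) (by positivity) n
  rw [abs_pow, div_mul_eq_mul_div, le_div_iff₀ (by positivity), mul_comm (_ ^ n), ← mul_pow]
  rwa [div_le_iff₀' (by positivity)] at h

theorem integrable_exp_mul_abs_of_le {l : Measure ℝ} {c d : ℝ} (hcd : c ≤ d)
    (hl : Integrable (fun z ↦ exp (d * |z|)) l) : Integrable (fun z ↦ exp (c * |z|)) l :=
  integrable_of_isBigO_top (isBigO_top_exp_mul_abs_of_le hcd)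
    (Measurable.aestronglyMeasurable (by fun_prop)) hl

theorem isBigO_top_primitive {b b' : ℝ} (hb : 0 ≤ b) (hbb' : b < b') {f : ℝ → ℝ}
    (hf : f =O[⊤] fun x ↦ exp (b * |x|)) :
    (fun x ↦ ∫ t in (0 : ℝ)..x, f t) =O[⊤] fun x ↦ exp (b' * |x|) := by
  obtain ⟨C, hC0, hC⟩ := isBigO_top_exp_iff.1 hf
  have hint : (fun x ↦ ∫ t in (0 : ℝ)..x, f t) =O[⊤] fun x ↦ exp (b * |x|) * x ^ 1 := by
    refine isBigO_top.2 ⟨C, fun x ↦ ?_⟩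
    have hbound : ∀ t ∈ uIoc 0 x, ‖f t‖ ≤ C * exp (b * |x|) := fun t ht ↦ by
      have htx : |t| ≤ |x| := by simpa using abs_sub_left_of_mem_uIcc (uIoc_subset_uIcc ht)
      refine (hC t).trans ?_
      gcongr
    simpa [mul_assoc] using intervalIntegral.norm_integral_le_of_norm_le_const hbound
  refine hint.trans (((isBigO_refl _ _).mul
    (pow_isBigO_top_exp_mul_abs 1 (sub_pos.2 hbb'))).congr_right fun x ↦ ?_)
  rw [← exp_add]; ring_nf

theorem exists_sub_isBigO_exp_neg {φ φ' : ℝ → ℝ} {ρ : ℝ} (hρ : 0 < ρ)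
    (hφ : ∀ x, HasDerivAt φ (φ' x) x) (hφ' : φ' =O[⊤] fun x ↦ exp (-ρ * x)) :
    ∃ L, (fun x ↦ φ x - L) =O[⊤] fun x ↦ exp (-ρ * x) := by
  obtain ⟨C, hC0, hC⟩ := isBigO_top_exp_iff.1 hφ'
  have hmeas : AEStronglyMeasurable φ' := by
    rw [← funext fun x ↦ (hφ x).deriv]
    exact (measurable_deriv φ).aestronglyMeasurable
  have hexp (x : ℝ) : IntegrableOn (fun t ↦ exp (-ρ * t)) (Ioi x) :=
    integrableOn_exp_mul_Ioi (neg_neg_of_pos hρ) x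
  have hint (x : ℝ) : IntegrableOn φ' (Ioi x) :=
    integrable_of_isBigO_top hφ' hmeas.restrict (hexp x)
  have hlim := tendsto_limUnder_of_hasDerivAt_of_integrableOn_Ioi (fun x _ ↦ hφ x) (hint 0)
  refine ⟨limUnder atTop φ, isBigO_top_exp_iff.2 ⟨C / ρ, by positivity, fun x ↦ ?_⟩⟩
  have htail := integral_Ioi_of_hasDerivAt_of_tendsto' (fun t (_ : t ∈ Ici x) ↦ hφ t) (hint x) hlim
  calc |φ x - limUnder atTop φ| = ‖∫ t in Ioi x, φ' t‖ := by rw [htail, norm_eq_abs, abs_sub_comm]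
    _ ≤ ∫ t in Ioi x, C * exp (-ρ * t) :=
        norm_integral_le_of_norm_le ((hexp x).const_mul C) (ae_of_all _ hC)
    _ = C / ρ * exp (-ρ * x) := by
        rw [integral_const_mul, integral_exp_mul_Ioi (neg_neg_of_pos hρ)]
        field_simp

end ExponentialGrowth

section Convolution

/-- The convolution `l * f` of a measure `l` with a function `f`; it is `0` at the points `x` where
`z ↦ f (x - z)` is not `l`-integrable. -/
noncomputable def measConv (l : Measure ℝ) (f : ℝ → ℝ) (x : ℝ) : ℝ := ∫ z, f (x - z) ∂l

variable {l : Measure ℝ} {f g : ℝ → ℝ} {b : ℝ}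

theorem stronglyMeasurable_measConv [SFinite l] (hf : Measurable f) :
    StronglyMeasurable (measConv l f) :=
  StronglyMeasurable.integral_prod_right (f := fun x z ↦ f (x - z))
    (hf.comp (measurable_fst.sub measurable_snd) :
      Measurable (fun p : ℝ × ℝ ↦ f (p.1 - p.2))).stronglyMeasurable

theorem integrable_comp_sub (hb : 0 ≤ b) (hf : Measurable f)
    (hfb : f =O[⊤] fun x ↦ exp (b * |x|)) (hl : Integrable (fun z ↦ exp (b * |z|)) l) (x : ℝ) :
    Integrable (fun z ↦ f (x - z)) l := by
  obtain ⟨C, hC0, hC⟩ := isBigO_top_exp_iff.1 hfb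
  refine ((hl.mul_const (exp (b * |x|))).const_mul C).mono'
    (hf.comp (measurable_const.sub measurable_id)).aestronglyMeasurable
    (ae_of_all _ fun z ↦ (hC (x - z)).trans ?_)
  gcongr
  exact exp_mul_abs_sub_le hb x z

theorem measConv_isBigO_exp {u : ℝ → ℝ} (hu : ∀ x z, u (x - z) ≤ b * |z| + u x)
    (hl : Integrable (fun z ↦ exp (b * |z|)) l) (hf : f =O[⊤] fun x ↦ exp (u x)) :
    measConv l f =O[⊤] fun x ↦ exp (u x) := by
  obtain ⟨C, hC0, hC⟩ := isBigO_top_exp_iff.1 hf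
  refine isBigO_top_exp_iff.2 ⟨C * ∫ z, exp (b * |z|) ∂l, by positivity, fun x ↦ ?_⟩
  have hbound (z : ℝ) : ‖f (x - z)‖ ≤ C * (exp (b * |z|) * exp (u x)) := by
    refine (hC (x - z)).trans ?_
    rw [← exp_add]
    gcongr
    exact hu x z
  refine (norm_integral_le_of_norm_le ((hl.mul_const _).const_mul C) (ae_of_all _ hbound)).trans ?_
  rw [integral_const_mul, integral_mul_const, mul_assoc]

theorem measConv_isBigO_exp_mul_abs (hb : 0 ≤ b) (hl : Integrable (fun z ↦ exp (b * |z|)) l)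
    (hf : f =O[⊤] fun x ↦ exp (b * |x|)) : measConv l f =O[⊤] fun x ↦ exp (b * |x|) :=
  measConv_isBigO_exp (fun x z ↦ by
    rw [← mul_add, add_comm]; exact mul_le_mul_of_nonneg_left (abs_sub x z) hb) hl hf

theorem measConv_isBigO_exp_neg {ρ : ℝ} (hρ : 0 ≤ ρ) (hl : Integrable (fun z ↦ exp (ρ * |z|)) l)
    (hf : f =O[⊤] fun x ↦ exp (-ρ * x)) : measConv l f =O[⊤] fun x ↦ exp (-ρ * x) :=
  measConv_isBigO_exp (fun x z ↦ by
    linarith [mul_le_mul_of_nonneg_left (le_abs_self z) hρ]) hl hf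

theorem hasDerivAt_measConv (hb : 0 ≤ b) (hl : Integrable (fun z ↦ exp (b * |z|)) l)
    (hgb : g =O[⊤] fun x ↦ exp (b * |x|)) (hfg : ∀ x, HasDerivAt f (g x) x)
    (hf : ∀ x, Integrable (fun z ↦ f (x - z)) l) (x : ℝ) :
    HasDerivAt (measConv l f) (measConv l g x) x := by
  obtain ⟨C, hC0, hC⟩ := isBigO_top_exp_iff.1 hgb
  have hg : Measurable g := by
    rw [← funext fun x ↦ (hfg x).deriv]
    exact measurable_deriv f
  refine (hasDerivAt_integral_of_dominated_loc_of_deriv_le (Metric.ball_mem_nhds x one_pos)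
    (bound := fun z ↦ C * (exp (b * |z|) * exp (b * (|x| + 1))))
    (Eventually.of_forall fun y ↦ (hf y).aestronglyMeasurable) (hf x)
    (hg.comp (measurable_const.sub measurable_id)).aestronglyMeasurable
    (ae_of_all _ fun z y hy ↦ (hC (y - z)).trans ?_) ((hl.mul_const _).const_mul C)
    (ae_of_all _ fun z y _ ↦ (hfg (y - z)).comp_sub_const y z)).2
  have hyx : |y| ≤ |x| + 1 := by
    rw [Metric.mem_ball, dist_eq] at hy
    linarith [abs_sub_abs_le_abs_sub y x]
  refine mul_le_mul_of_nonneg_left ((exp_mul_abs_sub_le hb y z).trans ?_) hC0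
  gcongr

end Convolution

section TaylorMeasure

/-- The second-order Taylor measure `κ` of a measure `l`: the image of `z² (1 - u) l(dz) du`,
`0 < u ≤ 1`, under `(z, u) ↦ z u`. When `l` is a centred probability measure, Taylor's formula with
integral remainder reads `κ * Φ'' = l * Φ - Φ`. -/
noncomputable def taylorMeasure (l : Measure ℝ) : Measure ℝ :=
  ((l.prod (volume.restrict (Ioc 0 1))).withDensity
    fun p ↦ ENNReal.ofReal (p.1 ^ 2 * (1 - p.2))).map fun p ↦ p.1 * p.2

variable {l : Measure ℝ} {f : ℝ → ℝ} {b d : ℝ}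

theorem integrable_pow_mul_exp_mul_abs (n : ℕ) (hbd : b < d)
    (hl : Integrable (fun z ↦ exp (d * |z|)) l) :
    Integrable (fun z ↦ z ^ n * exp (b * |z|)) l := by
  refine integrable_of_isBigO_top (((pow_isBigO_top_exp_mul_abs n (sub_pos.2 hbd)).mul
    (isBigO_refl (fun z ↦ exp (b * |z|)) ⊤)).congr_right (g₂ := fun z ↦ exp (d * |z|))
    fun z ↦ ?_) (Measurable.aestronglyMeasurable (by fun_prop)) hl
  rw [← exp_add]; ring_nf

theorem integrable_pow_of_integrable_exp_mul_abs (n : ℕ) (hd : 0 < d)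
    (hl : Integrable (fun z ↦ exp (d * |z|)) l) : Integrable (fun z ↦ z ^ n) l := by
  simpa using integrable_pow_mul_exp_mul_abs n hd hl

theorem integrable_of_integrable_exp_mul_abs (hd : 0 < d)
    (hl : Integrable (fun z ↦ exp (d * |z|)) l) : Integrable (fun z ↦ z) l := by
  simpa using integrable_pow_of_integrable_exp_mul_abs 1 hd hl

theorem ae_taylorWeight : ∀ᵐ p ∂l.prod (volume.restrict (Ioc (0 : ℝ) 1)),
    p.2 ∈ Ioc (0 : ℝ) 1 :=
  Measure.quasiMeasurePreserving_snd.ae (ae_restrict_mem measurableSet_Ioc)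

theorem integrable_taylorWeight_mul (hb : 0 ≤ b) (hbd : b < d)
    (hl : Integrable (fun z ↦ exp (d * |z|)) l) (hf : Measurable f)
    (hfb : f =O[⊤] fun x ↦ exp (b * |x|)) :
    Integrable (fun p : ℝ × ℝ ↦ p.1 ^ 2 * ((1 - p.2) * f (p.1 * p.2)))
      (l.prod (volume.restrict (Ioc 0 1))) := by
  obtain ⟨C, hC0, hC⟩ := isBigO_top_exp_iff.1 hfb
  refine (((integrable_pow_mul_exp_mul_abs 2 hbd hl).const_mul C).mul_prod
    (integrable_const (1 : ℝ))).mono' (Measurable.aestronglyMeasurable (by fun_prop)) ?_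
  filter_upwards [ae_taylorWeight] with p hp
  have hfp : |f (p.1 * p.2)| ≤ C * exp (b * |p.1|) := by
    refine (hC _).trans ?_
    rw [abs_mul, abs_of_pos hp.1]
    gcongr
    exact mul_le_of_le_one_right (abs_nonneg _) hp.2
  calc ‖p.1 ^ 2 * ((1 - p.2) * f (p.1 * p.2))‖ = p.1 ^ 2 * ((1 - p.2) * |f (p.1 * p.2)|) := by
        rw [norm_mul, norm_mul, norm_eq_abs, norm_eq_abs, norm_eq_abs, abs_sq,
          abs_of_nonneg (sub_nonneg.2 hp.2)]
    _ ≤ p.1 ^ 2 * (1 * (C * exp (b * |p.1|))) := by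
        gcongr
        linarith [hp.1]
    _ = C * (p.1 ^ 2 * exp (b * |p.1|)) * 1 := by ring

theorem toReal_taylorWeight_smul_ae_eq :
    (fun p : ℝ × ℝ ↦ (ENNReal.ofReal (p.1 ^ 2 * (1 - p.2))).toReal • f (p.1 * p.2))
      =ᵐ[l.prod (volume.restrict (Ioc 0 1))]
    fun p ↦ p.1 ^ 2 * ((1 - p.2) * f (p.1 * p.2)) := by
  filter_upwards [ae_taylorWeight] with p hp
  rw [ENNReal.toReal_ofReal (mul_nonneg (sq_nonneg _) (sub_nonneg.2 hp.2)), smul_eq_mul, mul_assoc]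

theorem integrable_taylorMeasure (hb : 0 ≤ b) (hbd : b < d)
    (hl : Integrable (fun z ↦ exp (d * |z|)) l) (hf : Measurable f)
    (hfb : f =O[⊤] fun x ↦ exp (b * |x|)) : Integrable f (taylorMeasure l) := by
  rw [taylorMeasure, integrable_map_measure hf.aestronglyMeasurable
      (Measurable.aemeasurable (by fun_prop)),
    integrable_withDensity_iff_integrable_smul₀' (Measurable.aemeasurable (by fun_prop)) (by simp)]
  exact (integrable_congr toReal_taylorWeight_smul_ae_eq).2
    (integrable_taylorWeight_mul hb hbd hl hf hfb)

theorem integral_taylorMeasure [SFinite l] (hb : 0 ≤ b) (hbd : b < d)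
    (hl : Integrable (fun z ↦ exp (d * |z|)) l) (hf : Measurable f)
    (hfb : f =O[⊤] fun x ↦ exp (b * |x|)) :
    ∫ v, f v ∂taylorMeasure l = ∫ z, z ^ 2 * (∫ u in (0 : ℝ)..1, (1 - u) * f (z * u)) ∂l := by
  rw [taylorMeasure, integral_map (Measurable.aemeasurable (by fun_prop)) hf.aestronglyMeasurable,
    integral_withDensity_eq_integral_toReal_smul₀ (Measurable.aemeasurable (by fun_prop)) (by simp),
    integral_congr_ae toReal_taylorWeight_smul_ae_eq,
    integral_prod _ (integrable_taylorWeight_mul hb hbd hl hf hfb)]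
  simp only [integral_const_mul, intervalIntegral.integral_of_le zero_le_one]

theorem isFiniteMeasure_taylorMeasure (hd : 0 < d)
    (hl : Integrable (fun z ↦ exp (d * |z|)) l) : IsFiniteMeasure (taylorMeasure l) :=
  (integrable_const_iff_isFiniteMeasure one_ne_zero).1
    (integrable_taylorMeasure le_rfl hd hl measurable_const (isBigO_top_exp_iff.2 ⟨1, by simp⟩))

theorem integrable_exp_mul_abs_taylorMeasure (hb : 0 ≤ b) (hbd : b < d)
    (hl : Integrable (fun z ↦ exp (d * |z|)) l) :
    Integrable (fun v ↦ exp (b * |v|)) (taylorMeasure l) :=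
  integrable_taylorMeasure hb hbd hl (by fun_prop) (isBigO_refl _ _)

theorem measureReal_univ_taylorMeasure [SFinite l] (hd : 0 < d)
    (hl : Integrable (fun z ↦ exp (d * |z|)) l) :
    (taylorMeasure l).real univ = (∫ z, z ^ 2 ∂l) / 2 := by
  have h := integral_taylorMeasure (f := fun _ ↦ 1) le_rfl hd hl measurable_const
    (isBigO_top_exp_iff.2 ⟨1, by simp⟩)
  have hu : ∫ u in (0 : ℝ)..1, (1 - u) * 1 = 1 / 2 := by
    rw [intervalIntegral.integral_mul_const, intervalIntegral.integral_sub (by simp) (by simp),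
      integral_id]
    norm_num
  rw [integral_const, smul_eq_mul, mul_one] at h
  rw [h, hu, integral_mul_const, mul_one_div]

theorem neZero_taylorMeasure [SFinite l] (hd : 0 < d) (hl : Integrable (fun z ↦ exp (d * |z|)) l)
    (h0 : l {0}ᶜ ≠ 0) : NeZero (taylorMeasure l) := by
  refine ⟨fun h ↦ h0 ?_⟩
  have hsq : ∫ z, z ^ 2 ∂l = 0 := by
    have := measureReal_univ_taylorMeasure hd hl
    rw [h, measureReal_zero] at this
    simpa using this.symm
  have hae := (integral_eq_zero_iff_of_nonneg (fun z ↦ sq_nonneg z)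
    (integrable_pow_of_integrable_exp_mul_abs 2 hd hl)).1 hsq
  simpa [EventuallyEq, ae_iff, compl_def] using hae

theorem taylor_two_integral_remainder {Φ G F : ℝ → ℝ} (hF : Continuous F)
    (hG : ∀ x, HasDerivAt G (F x) x) (hΦ : ∀ x, HasDerivAt Φ (G x) x) (x z : ℝ) :
    z ^ 2 * ∫ u in (0 : ℝ)..1, (1 - u) * F (x - z * u) = Φ (x - z) - Φ x + z * G x := by
  have hderiv (u : ℝ) : HasDerivAt (fun u ↦ Φ (x - z * u) - z * ((1 - u) * G (x - z * u)))
      (z ^ 2 * ((1 - u) * F (x - z * u))) u := by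
    have hline : HasDerivAt (fun u : ℝ ↦ x - z * u) (-z) u := by
      simpa using ((hasDerivAt_id u).const_mul z).const_sub x
    have hweight : HasDerivAt (fun u : ℝ ↦ 1 - u) (-1) u := by
      simpa using (hasDerivAt_id u).const_sub 1
    refine (((hΦ _).comp u hline).sub
      ((hweight.mul ((hG _).comp u hline)).const_mul z)).congr_deriv ?_
    simp only [Function.comp_apply]
    ring
  rw [← intervalIntegral.integral_const_mul,
    intervalIntegral.integral_eq_sub_of_hasDerivAt (fun u _ ↦ hderiv u)
      (Continuous.intervalIntegrable (by fun_prop) _ _)]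
  simp
  ring

theorem measConv_taylorMeasure [IsProbabilityMeasure l] (hmean : ∫ z, z ∂l = 0) (hb : 0 ≤ b)
    (hbd : b < d) (hl : Integrable (fun z ↦ exp (d * |z|)) l) {Φ G F : ℝ → ℝ} (hF : Continuous F)
    (hFb : F =O[⊤] fun x ↦ exp (b * |x|)) (hG : ∀ x, HasDerivAt G (F x) x)
    (hΦ : ∀ x, HasDerivAt Φ (G x) x) {x : ℝ} (hΦi : Integrable (fun z ↦ Φ (x - z)) l) :
    measConv (taylorMeasure l) F x = measConv l Φ x - Φ x := by
  have hFx : (fun v ↦ F (x - v)) =O[⊤] fun v ↦ exp (b * |v|) := by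
    obtain ⟨C, hC0, hC⟩ := isBigO_top_exp_iff.1 hFb
    refine isBigO_top_exp_iff.2 ⟨C * exp (b * |x|), by positivity, fun v ↦ (hC _).trans ?_⟩
    rw [mul_assoc, mul_comm (exp _)]
    gcongr
    exact exp_mul_abs_sub_le hb x v
  have hz := integrable_of_integrable_exp_mul_abs (hb.trans_lt hbd) hl
  rw [measConv, integral_taylorMeasure hb hbd hl (by fun_prop) hFx]
  simp only [taylor_two_integral_remainder hF hG hΦ]
  have hΦx : Integrable (fun z ↦ Φ (x - z) - Φ x) l := hΦi.sub (integrable_const _)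
  rw [integral_add hΦx (hz.mul_const _), integral_sub hΦi (integrable_const _),
    integral_mul_const, hmean]
  simp [measConv]

theorem exists_measConv_taylorMeasure_sub_isBigO [IsProbabilityMeasure l]
    (hmean : ∫ z, z ∂l = 0) (hb : 0 ≤ b) (hbd : b < d)
    (hl : Integrable (fun z ↦ exp (d * |z|)) l) {F : ℝ → ℝ} (hF : Continuous F)
    (hFb : F =O[⊤] fun x ↦ exp (b * |x|)) {ρ : ℝ} (hρ : 0 < ρ)
    (hFρ : (fun x ↦ measConv l F x - F x) =O[⊤] fun x ↦ exp (-ρ * x)) :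
    ∃ m c, (fun x ↦ measConv (taylorMeasure l) F x - (m * x + c)) =O[⊤] fun x ↦ exp (-ρ * x) := by
  obtain ⟨b₁, hb₁, hb₁d⟩ := exists_between hbd
  obtain ⟨b₂, hb₂, hb₂d⟩ := exists_between hb₁d
  have hprim {f : ℝ → ℝ} (hf : Continuous f) (x : ℝ) :
      HasDerivAt (fun x ↦ ∫ t in (0 : ℝ)..x, f t) (f x) x :=
    (hf.integral_hasStrictDerivAt 0 x).hasDerivAt
  set G := fun x ↦ ∫ t in (0 : ℝ)..x, F t
  have hG : ∀ x, HasDerivAt G (F x) x := hprim hF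
  have hGc : Continuous G := continuous_iff_continuousAt.2 fun x ↦ (hG x).continuousAt
  have hGb : G =O[⊤] fun x ↦ exp (b₁ * |x|) := isBigO_top_primitive hb hb₁ hFb
  set Φ := fun x ↦ ∫ t in (0 : ℝ)..x, G t
  have hΦ : ∀ x, HasDerivAt Φ (G x) x := hprim hGc
  have hΦc : Continuous Φ := continuous_iff_continuousAt.2 fun x ↦ (hΦ x).continuousAt
  have hΦb : Φ =O[⊤] fun x ↦ exp (b₂ * |x|) := isBigO_top_primitive (hb.trans hb₁.le) hb₂ hGb
  have hl₁ := integrable_exp_mul_abs_of_le hb₁d.le hl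
  have hGi := integrable_comp_sub (hb.trans hb₁.le) hGc.measurable hGb hl₁
  have hΦi := integrable_comp_sub ((hb.trans hb₁.le).trans hb₂.le) hΦc.measurable hΦb
    (integrable_exp_mul_abs_of_le hb₂d.le hl)
  have hG' := hasDerivAt_measConv hb (integrable_exp_mul_abs_of_le hbd.le hl) hFb hG hGi
  have hΦ' := hasDerivAt_measConv (hb.trans hb₁.le) hl₁ hGb hΦ hΦi
  obtain ⟨m, hm⟩ := exists_sub_isBigO_exp_neg hρ (fun x ↦ (hG' x).sub (hG x)) hFρ
  obtain ⟨c, hc⟩ := exists_sub_isBigO_exp_neg hρ (fun x ↦ ((hΦ' x).sub (hΦ x)).sub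
    ((hasDerivAt_id x).const_mul m)) (by simpa using hm)
  refine ⟨m, c, hc.congr_left fun x ↦ ?_⟩
  rw [measConv_taylorMeasure hmean hb hbd hl hF hFb hG hΦ (hΦi x)]
  simp [sub_sub, add_assoc]

end TaylorMeasure

section Overlap

theorem tendsto_integral_abs_sub_comp_add {f : ℝ → ℝ} (hf : Integrable f) :
    Tendsto (fun v ↦ ∫ x, |f x - f (v + x)|) (𝓝 0) (𝓝 0) := by
  have : Fact ((1 : ℝ≥0∞) ≠ ∞) := ⟨ENNReal.one_ne_top⟩
  have hf1 : MemLp f 1 := memLp_one_iff_integrable.2 hf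
  have hcont : Continuous fun v : ℝ ↦ DomAddAct.mk v +ᵥ hf1.toLp f :=
    DomAddAct.continuous_mk.vadd continuous_const
  have hnorm (v : ℝ) :
      ‖hf1.toLp f - (DomAddAct.mk v +ᵥ hf1.toLp f)‖ = ∫ x, |f x - f (v + x)| := by
    rw [DomAddAct.mk_vadd_toLp, ← MemLp.toLp_sub, Lp.norm_toLp, eLpNorm_one_eq_lintegral_enorm,
      ← integral_norm_eq_lintegral_enorm (hf1.sub _).1]
    · rfl
    · exact hf1.comp_measurePreserving (measurePreserving_vadd v volume)
  have h := (continuous_const (y := hf1.toLp f)).sub hcont |>.norm.tendsto 0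
  simpa only [Pi.sub_apply, hnorm, zero_add, sub_self, abs_zero, integral_zero] using h

theorem exists_pos_le_integral_min_comp_add {f : ℝ → ℝ} (hf : Integrable f) (hf0 : 0 ≤ f)
    (hpos : 0 < ∫ x, f x) :
    ∃ r > 0, ∃ m > 0, ∀ v, |v| ≤ r → m ≤ ∫ x, min (f x) (f (v + x)) * exp (-|x|) := by
  have hexp (x : ℝ) : exp (-|x|) ≤ 1 := exp_le_one_iff.2 (neg_nonpos.2 (abs_nonneg x))
  have hweight {g : ℝ → ℝ} (hg : Integrable g) : Integrable fun x ↦ g x * exp (-|x|) :=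
    hg.mul_bdd (c := 1) (Measurable.aestronglyMeasurable (by fun_prop))
      (ae_of_all _ fun x ↦ by simp)
  set M := ∫ x, f x * exp (-|x|)
  have hM : 0 < M := by
    rw [integral_pos_iff_support_of_nonneg (fun x ↦ mul_nonneg (hf0 x) (exp_pos _).le) (hweight hf)]
    rw [integral_pos_iff_support_of_nonneg hf0 hf] at hpos
    rwa [Function.support_mul, show Function.support (fun x : ℝ ↦ exp (-|x|)) = univ by ext; simp,
      inter_univ]
  obtain ⟨r, hr, hclose⟩ := Metric.eventually_nhds_iff.1
    ((tendsto_integral_abs_sub_comp_add hf).eventually_lt_const (half_pos hM))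
  refine ⟨r / 2, half_pos hr, M / 2, half_pos hM, fun v hv ↦ ?_⟩
  have hfv : Integrable fun x ↦ f (v + x) := hf.comp_add_left v
  calc M / 2 ≤ M - ∫ x, |f x - f (v + x)| := by
        have := hclose (y := v) (by rw [dist_zero_right, norm_eq_abs]; linarith)
        linarith
    _ = ∫ x, (f x * exp (-|x|) - |f x - f (v + x)|) :=
        (integral_sub (hweight hf) (hf.sub hfv).abs).symm
    _ ≤ ∫ x, min (f x) (f (v + x)) * exp (-|x|) := by
        refine integral_mono ((hweight hf).sub (hf.sub hfv).abs) (hweight (hf.inf hfv)) fun x ↦ ?_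
        have hmin : f x - |f x - f (v + x)| ≤ min (f x) (f (v + x)) :=
          le_min (by linarith [abs_nonneg (f x - f (v + x))])
            (by linarith [le_abs_self (f x - f (v + x))])
        nlinarith [abs_nonneg (f x - f (v + x)), hexp x, exp_pos (-|x|)]

end Overlap

section Energy

/-- Quasi-invariance of `ω` under translations, at exponential rate `c`. The model case is
`ω(dx) = exp (-c |x - R|) dx`, a weight localised around `R`. -/
def ExpQuasiInvariant (c : ℝ) (ω : Measure ℝ) : Prop :=
  ∀ z : ℝ, ω.map (fun x ↦ x - z) ≤ ENNReal.ofReal (exp (c * |z|)) • ω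

/-- The energy `∫ (D(x) - D(x - v))² ω(dx)` of the increments of `D` over a translation by `v`. -/
noncomputable def translationEnergy (ω : Measure ℝ) (D : ℝ → ℝ) (v : ℝ) : ℝ :=
  ∫ x, (D x - D (x - v)) ^ 2 ∂ω

variable {ω l : Measure ℝ} {c : ℝ} {D f : ℝ → ℝ}

theorem ExpQuasiInvariant.integrable_comp_sub (hω : ExpQuasiInvariant c ω) (hf : Integrable f ω)
    (z : ℝ) : Integrable (fun x ↦ f (x - z)) ω :=
  (measurableEmbedding_subRight z).integrable_map_iff.1
    ((hf.smul_measure ENNReal.ofReal_ne_top).mono_measure (hω z))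

theorem ExpQuasiInvariant.integral_comp_sub_le (hω : ExpQuasiInvariant c ω) (hf : Integrable f ω)
    (hf0 : 0 ≤ f) (z : ℝ) : ∫ x, f (x - z) ∂ω ≤ exp (c * |z|) * ∫ x, f x ∂ω :=
  calc ∫ x, f (x - z) ∂ω = ∫ x, f x ∂ω.map fun x ↦ x - z :=
        ((measurableEmbedding_subRight z).integral_map f).symm
    _ ≤ ∫ x, f x ∂(ENNReal.ofReal (exp (c * |z|)) • ω) :=
        integral_mono_measure (hω z) (ae_of_all _ hf0) (hf.smul_measure ENNReal.ofReal_ne_top)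
    _ = exp (c * |z|) * ∫ x, f x ∂ω := by
        rw [integral_smul_measure, ENNReal.toReal_ofReal (exp_pos _).le, smul_eq_mul]

theorem ExpQuasiInvariant.memLp_comp_sub (hω : ExpQuasiInvariant c ω) (hD : MemLp D 2 ω) (z : ℝ) :
    MemLp (fun x ↦ D (x - z)) 2 ω :=
  (measurableEmbedding_subRight z).memLp_map_measure_iff.1
    ((hD.smul_measure ENNReal.ofReal_ne_top).mono_measure (hω z))

theorem translationEnergy_nonneg (v : ℝ) : 0 ≤ translationEnergy ω D v :=
  integral_nonneg fun _ ↦ sq_nonneg _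

theorem ExpQuasiInvariant.integrable_sq_sub (hω : ExpQuasiInvariant c ω) (hD : MemLp D 2 ω)
    (v : ℝ) : Integrable (fun x ↦ (D x - D (x - v)) ^ 2) ω :=
  (hD.sub (hω.memLp_comp_sub hD v)).integrable_sq

theorem translationEnergy_nat_mul_le (hc : 0 ≤ c) (hω : ExpQuasiInvariant c ω)
    (hD : MemLp D 2 ω) (n : ℕ) (v : ℝ) :
    translationEnergy ω D (n * v) ≤ n ^ 2 * exp (c * (n * |v|)) * translationEnergy ω D v := by
  set g := fun x ↦ (D x - D (x - v)) ^ 2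
  have hg : Integrable g ω := hω.integrable_sq_sub hD v
  have hgj (j : ℕ) : Integrable (fun x ↦ g (x - j * v)) ω := hω.integrable_comp_sub hg _
  have htelescope (x : ℝ) :
      (D x - D (x - n * v)) ^ 2 ≤ n * ∑ j ∈ Finset.range n, g (x - j * v) := by
    have hsum : ∑ j ∈ Finset.range n, (D (x - j * v) - D (x - j * v - v)) =
        D x - D (x - n * v) := by
      convert Finset.sum_range_sub' (fun j : ℕ ↦ D (x - j * v)) n using 4
      · push_cast; ring
      · simp
    simpa [hsum] using sq_sum_le_card_mul_sum_sq (s := Finset.range n)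
      (f := fun j ↦ D (x - j * v) - D (x - j * v - v))
  calc translationEnergy ω D (n * v) ≤ ∫ x, n * ∑ j ∈ Finset.range n, g (x - j * v) ∂ω :=
        integral_mono (hω.integrable_sq_sub hD _)
          ((integrable_finsetSum _ fun j _ ↦ hgj j).const_mul _) htelescope
    _ = n * ∑ j ∈ Finset.range n, ∫ x, g (x - j * v) ∂ω := by
        rw [integral_const_mul, integral_finsetSum _ fun j _ ↦ hgj j]
    _ ≤ n * ∑ _ ∈ Finset.range n, exp (c * (n * |v|)) * translationEnergy ω D v := by
        gcongr with j hj
        refine (hω.integral_comp_sub_le hg (fun _ ↦ sq_nonneg _) _).trans ?_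
        rw [abs_mul, Nat.abs_cast]
        have hjn : (j : ℝ) ≤ n := mod_cast (Finset.mem_range.1 hj).le
        exact mul_le_mul_of_nonneg_right (by gcongr) (translationEnergy_nonneg v)
    _ = n ^ 2 * exp (c * (n * |v|)) * translationEnergy ω D v := by
        rw [Finset.sum_const, Finset.card_range, nsmul_eq_mul]; ring

theorem translationEnergy_le_add (hω : ExpQuasiInvariant c ω) (hD : MemLp D 2 ω) (v z : ℝ) :
    translationEnergy ω D v ≤
      2 * exp (c * |z|) * (translationEnergy ω D z + translationEnergy ω D (v + z)) := by
  have hz := hω.integrable_sq_sub hD z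
  have hvz := hω.integrable_sq_sub hD (v + z)
  set g := fun x ↦ (D (x - z) - D (x - (v + z))) ^ 2
  have hg : Integrable g ω := ((hω.memLp_comp_sub hD z).sub (hω.memLp_comp_sub hD _)).integrable_sq
  calc translationEnergy ω D v = ∫ x, g (x - -z) ∂ω :=
        integral_congr_ae (ae_of_all _ fun x ↦ by simp only [g]; ring_nf)
    _ ≤ exp (c * |z|) * ∫ x, g x ∂ω := by
        simpa using hω.integral_comp_sub_le hg (fun _ ↦ sq_nonneg _) (-z)
    _ ≤ exp (c * |z|) * ∫ x, 2 * ((D x - D (x - z)) ^ 2 + (D x - D (x - (v + z))) ^ 2) ∂ω := by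
        gcongr
        · exact (hz.add hvz).const_mul 2
        · intro x
          simp only [g]
          nlinarith [sq_nonneg (D x - D (x - z) + (D x - D (x - (v + z))))]
    _ = 2 * exp (c * |z|) * (translationEnergy ω D z + translationEnergy ω D (v + z)) := by
        rw [integral_const_mul, integral_add hz hvz, translationEnergy, translationEnergy]; ring

theorem integrable_sq_comp_sub_prod [SFinite ω] [SFinite l] (hω : ExpQuasiInvariant c ω)
    (hDm : Measurable D) (hD : MemLp D 2 ω) (hl : Integrable (fun z ↦ exp (c * |z|)) l) :
    Integrable (fun p : ℝ × ℝ ↦ D (p.1 - p.2) ^ 2) (ω.prod l) := by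
  have hmeas : StronglyMeasurable fun p : ℝ × ℝ ↦ D (p.1 - p.2) ^ 2 :=
    ((hDm.comp (measurable_fst.sub measurable_snd)).pow_const 2).stronglyMeasurable
  refine (integrable_prod_iff' hmeas.aestronglyMeasurable).2
    ⟨ae_of_all _ fun z ↦ (hω.memLp_comp_sub hD z).integrable_sq, ?_⟩
  refine (hl.mul_const (∫ x, D x ^ 2 ∂ω)).mono'
    hmeas.norm.integral_prod_left'.aestronglyMeasurable (ae_of_all _ fun z ↦ ?_)
  simp only [norm_eq_abs, abs_sq]
  rw [abs_of_nonneg (integral_nonneg fun _ ↦ sq_nonneg _)]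
  exact hω.integral_comp_sub_le hD.integrable_sq (fun _ ↦ sq_nonneg _) z

theorem integrable_mul_comp_sub_prod [SFinite ω] [IsFiniteMeasure l] (hω : ExpQuasiInvariant c ω)
    (hDm : Measurable D) (hD : MemLp D 2 ω) (hl : Integrable (fun z ↦ exp (c * |z|)) l) :
    Integrable (fun p : ℝ × ℝ ↦ D p.1 * D (p.1 - p.2)) (ω.prod l) := by
  have hsub : Measurable fun p : ℝ × ℝ ↦ D (p.1 - p.2) :=
    hDm.comp (measurable_fst.sub measurable_snd)
  have h1 : MemLp (fun p : ℝ × ℝ ↦ D p.1) 2 (ω.prod l) := hD.comp_fst l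
  exact h1.integrable_mul ((memLp_two_iff_integrable_sq hsub.aestronglyMeasurable).2
    (integrable_sq_comp_sub_prod hω hDm hD hl))

theorem integrable_translationEnergy [SFinite ω] [IsFiniteMeasure l] (hω : ExpQuasiInvariant c ω)
    (hDm : Measurable D) (hD : MemLp D 2 ω) (hl : Integrable (fun z ↦ exp (c * |z|)) l) :
    Integrable (translationEnergy ω D) l := by
  have hsub : Measurable fun p : ℝ × ℝ ↦ D (p.1 - p.2) :=
    hDm.comp (measurable_fst.sub measurable_snd)
  exact (((hD.comp_fst l).sub ((memLp_two_iff_integrable_sq hsub.aestronglyMeasurable).2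
    (integrable_sq_comp_sub_prod hω hDm hD hl))).integrable_sq).integral_prod_right

end Energy

section EnergyBound

variable {ω l : Measure ℝ} {c d : ℝ} {D f : ℝ → ℝ}

theorem translationEnergy_mul_overlap_le (hc : c ≤ 1) (hω : ExpQuasiInvariant c ω)
    (hD : MemLp D 2 ω) (hf : Integrable f) (hf0 : 0 ≤ f)
    (hfq : Integrable fun z ↦ f z * translationEnergy ω D z) (v : ℝ) :
    translationEnergy ω D v * ∫ z, min (f z) (f (v + z)) * exp (-|z|) ≤
      4 * ∫ z, f z * translationEnergy ω D z := by
  set q := translationEnergy ω D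
  have hq (z : ℝ) : 0 ≤ q z := translationEnergy_nonneg z
  have hfqv : Integrable fun z ↦ f (v + z) * q (v + z) := hfq.comp_add_left v
  have hpoint (z : ℝ) : q v * (min (f z) (f (v + z)) * exp (-|z|)) ≤
      2 * (f z * q z + f (v + z) * q (v + z)) := by
    have hmin : 0 ≤ min (f z) (f (v + z)) := le_min (hf0 z) (hf0 _)
    have hexp : exp (c * |z|) * exp (-|z|) ≤ 1 := by
      rw [← exp_add]
      exact exp_le_one_iff.2 (by nlinarith [abs_nonneg z])
    calc q v * (min (f z) (f (v + z)) * exp (-|z|))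
        ≤ 2 * exp (c * |z|) * (q z + q (v + z)) * (min (f z) (f (v + z)) * exp (-|z|)) := by
          gcongr
          exact translationEnergy_le_add hω hD v z
      _ = 2 * (min (f z) (f (v + z)) * q z + min (f z) (f (v + z)) * q (v + z)) *
            (exp (c * |z|) * exp (-|z|)) := by ring
      _ ≤ 2 * (f z * q z + f (v + z) * q (v + z)) := by
          refine (mul_le_of_le_one_right (by have := hq z; have := hq (v + z); positivity)
            hexp).trans ?_
          gcongr
          exacts [hq z, min_le_left _ _, hq _, min_le_right _ _]
  have hint : Integrable fun z ↦ min (f z) (f (v + z)) * exp (-|z|) :=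
    (hf.inf (hf.comp_add_left v)).mul_bdd (c := 1) (Measurable.aestronglyMeasurable (by fun_prop))
      (ae_of_all _ fun z ↦ by simp)
  calc q v * ∫ z, min (f z) (f (v + z)) * exp (-|z|)
      ≤ ∫ z, 2 * (f z * q z + f (v + z) * q (v + z)) := by
        rw [← integral_const_mul]
        exact integral_mono (hint.const_mul _) ((hfq.add hfqv).const_mul 2) hpoint
    _ = 4 * ∫ z, f z * q z := by
        rw [integral_const_mul, integral_add hfq hfqv,
          integral_add_left_eq_self (fun z ↦ f z * q z) v]
        ring

theorem exists_translationEnergy_le_of_abs_le [IsFiniteMeasure l] [NeZero l] (hl : l ≪ volume)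
    (hd : Integrable (fun z ↦ exp (d * |z|)) l) :
    ∃ r > 0, ∃ C ≥ 0, ∀ c ≤ min 1 d, ∀ (ω : Measure ℝ) [SFinite ω], ExpQuasiInvariant c ω →
      ∀ D, Measurable D → MemLp D 2 ω → ∀ v, |v| ≤ r →
        translationEnergy ω D v ≤ C * ∫ z, translationEnergy ω D z ∂l := by
  set f := fun z ↦ (l.rnDeriv volume z).toReal
  have hf : Integrable f := Measure.integrable_toReal_rnDeriv
  have hf0 : 0 ≤ f := fun _ ↦ ENNReal.toReal_nonneg
  have hfpos : 0 < ∫ z, f z := by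
    rw [Measure.integral_toReal_rnDeriv hl]
    exact measureReal_univ_pos
  obtain ⟨r, hr, m, hm, hoverlap⟩ := exists_pos_le_integral_min_comp_add hf hf0 hfpos
  refine ⟨r, hr, 4 / m, by positivity, fun c hc ω _ hω D hDm hD v hv ↦ ?_⟩
  have hq : Integrable (translationEnergy ω D) l := integrable_translationEnergy hω hDm hD
    (integrable_exp_mul_abs_of_le (hc.trans (min_le_right _ _)) hd)
  have h := translationEnergy_mul_overlap_le (hc.trans (min_le_left _ _)) hω hD hf hf0
    ((integrable_rnDeriv_smul_iff hl).2 hq) v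
  rw [show ∫ z, f z * translationEnergy ω D z = ∫ z, translationEnergy ω D z ∂l from
    integral_rnDeriv_smul hl] at h
  rw [div_mul_eq_mul_div, le_div_iff₀ hm]
  exact (mul_le_mul_of_nonneg_left (hoverlap v hv) (translationEnergy_nonneg v)).trans h

theorem exists_translationEnergy_le_exp_mul [IsFiniteMeasure l] [NeZero l] (hl : l ≪ volume)
    (hd : 0 < d) (hld : Integrable (fun z ↦ exp (d * |z|)) l) :
    ∃ C ≥ 0, ∀ c, 0 ≤ c → c ≤ min 1 (d / 2) → ∀ (ω : Measure ℝ) [SFinite ω],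
      ExpQuasiInvariant c ω → ∀ D, Measurable D → MemLp D 2 ω → ∀ v,
        translationEnergy ω D v ≤ C * exp (d * |v|) * ∫ z, translationEnergy ω D z ∂l := by
  obtain ⟨r, hr, C, hC, hshort⟩ := exists_translationEnergy_le_of_abs_le hl hld
  refine ⟨(4 / (d * r) + 1) ^ 2 * C, by positivity, fun c hc0 hc ω _ hω D hDm hD v ↦ ?_⟩
  have hcd : c ≤ d / 2 := hc.trans (min_le_right _ _)
  set Q := ∫ z, translationEnergy ω D z ∂l
  have : 0 ≤ Q := integral_nonneg fun z ↦ translationEnergy_nonneg z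
  set n := ⌊|v| / r⌋₊ + 1
  have hn : (0 : ℝ) < n := by positivity
  have hstep : |v / n| ≤ r := by
    rw [abs_div, Nat.abs_cast, div_le_iff₀ hn, mul_comm, ← div_le_iff₀ hr]
    exact_mod_cast (Nat.lt_floor_add_one (|v| / r)).le
  have hn_le : (n : ℝ) ≤ (4 / (d * r) + 1) * exp (d / 4 * |v|) := by
    have h1 : (n : ℝ) ≤ |v| / r + 1 := by
      push_cast [n]
      linarith [Nat.floor_le (div_nonneg (abs_nonneg v) hr.le)]
    have h2 : |v| / r = 4 / (d * r) * (d / 4 * |v|) := by field_simp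
    have h3 := add_one_le_exp (d / 4 * |v|)
    have h4 := one_le_exp (show 0 ≤ d / 4 * |v| by positivity)
    calc (n : ℝ) ≤ 4 / (d * r) * (d / 4 * |v|) + 1 := h2 ▸ h1
      _ ≤ 4 / (d * r) * exp (d / 4 * |v|) + exp (d / 4 * |v|) := by gcongr; linarith
      _ = _ := by ring
  calc translationEnergy ω D v = translationEnergy ω D (n * (v / n)) := by
        rw [mul_div_cancel₀ v hn.ne']
    _ ≤ n ^ 2 * exp (c * (n * |v / n|)) * translationEnergy ω D (v / n) :=
        translationEnergy_nat_mul_le hc0 hω hD n _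
    _ = n ^ 2 * exp (c * |v|) * translationEnergy ω D (v / n) := by
        rw [abs_div, Nat.abs_cast, mul_div_cancel₀ _ hn.ne']
    _ ≤ ((4 / (d * r) + 1) * exp (d / 4 * |v|)) ^ 2 * exp (d / 2 * |v|) * (C * Q) := by
        gcongr
        · exact translationEnergy_nonneg _
        · exact hshort c (hc.trans (min_le_min_left 1 (half_le_self hd.le))) ω hω D hDm hD _ hstep
    _ = (4 / (d * r) + 1) ^ 2 * C * exp (d * |v|) * Q := by
        rw [mul_pow, ← exp_nat_mul, show d * |v| = (2 : ℕ) * (d / 4 * |v|) + d / 2 * |v| by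
          push_cast; ring, exp_add]
        ring

end EnergyBound

section Coercivity

theorem sq_integral_mul_le {α : Type*} [MeasurableSpace α] {μ : Measure α} {f g : α → ℝ}
    (hf : MemLp f 2 μ) (hg : MemLp g 2 μ) :
    (∫ x, f x * g x ∂μ) ^ 2 ≤ (∫ x, f x ^ 2 ∂μ) * ∫ x, g x ^ 2 ∂μ := by
  have hfg : Integrable (fun x ↦ f x * g x) μ := hf.integrable_mul hg
  have hquadratic (t : ℝ) : 0 ≤ (∫ x, f x ^ 2 ∂μ) * (t * t) + 2 * (∫ x, f x * g x ∂μ) * t +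
      ∫ x, g x ^ 2 ∂μ := by
    calc 0 ≤ ∫ x, (t * f x + g x) ^ 2 ∂μ := integral_nonneg fun _ ↦ sq_nonneg _
      _ = ∫ x, ((t * t) * f x ^ 2 + (2 * t) * (f x * g x) + g x ^ 2) ∂μ := by
          congr with x; ring
      _ = _ := by
          rw [integral_add ((hf.integrable_sq.const_mul _).fun_add (hfg.const_mul _))
            hg.integrable_sq, integral_add (hf.integrable_sq.const_mul _) (hfg.const_mul _),
            integral_const_mul, integral_const_mul]
          ring
  have h := discrim_le_zero hquadratic
  rw [discrim] at h
  linarith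

theorem two_mul_integral_mul_le {α : Type*} [MeasurableSpace α] {μ : Measure α} {f g : α → ℝ}
    (hf : MemLp f 2 μ) (hg : MemLp g 2 μ) {ε : ℝ} (hε : 0 < ε) :
    2 * ∫ x, f x * g x ∂μ ≤ ε * ∫ x, f x ^ 2 ∂μ + ε⁻¹ * ∫ x, g x ^ 2 ∂μ := by
  rw [← integral_const_mul, ← integral_const_mul, ← integral_const_mul,
    ← integral_add (hf.integrable_sq.const_mul _) (hg.integrable_sq.const_mul _)]
  refine integral_mono ((hf.integrable_mul hg).const_mul 2)
    ((hf.integrable_sq.const_mul _).add (hg.integrable_sq.const_mul _)) fun x ↦ ?_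
  have h : ε * f x ^ 2 + ε⁻¹ * g x ^ 2 - 2 * (f x * g x) = ε⁻¹ * (ε * f x - g x) ^ 2 := by
    field_simp; ring
  have : 0 ≤ ε⁻¹ * (ε * f x - g x) ^ 2 := by positivity
  simp only
  linarith

variable {ω l κ : Measure ℝ} {c d : ℝ} {D : ℝ → ℝ}

theorem memLp_measConv [SFinite ω] [IsFiniteMeasure l] (hω : ExpQuasiInvariant c ω)
    (hDm : Measurable D) (hD : MemLp D 2 ω) (hl : Integrable (fun z ↦ exp (c * |z|)) l) :
    MemLp (measConv l D) 2 ω := by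
  have hprod := integrable_sq_comp_sub_prod hω hDm hD hl
  refine (memLp_two_iff_integrable_sq (stronglyMeasurable_measConv hDm).aestronglyMeasurable).2 ?_
  refine (hprod.integral_prod_left.const_mul (l.real univ)).mono'
    ((stronglyMeasurable_measConv hDm).pow 2).aestronglyMeasurable ?_
  filter_upwards [hprod.prod_right_ae] with x hx
  have hDx : MemLp (fun z ↦ D (x - z)) 2 l := (memLp_two_iff_integrable_sq
    (hDm.comp (measurable_const.sub measurable_id)).aestronglyMeasurable).2 hx
  simpa [measConv] using sq_integral_mul_le (memLp_const (1 : ℝ)) hDx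

theorem integral_translationEnergy [SFinite ω] [IsFiniteMeasure l] (hω : ExpQuasiInvariant c ω)
    (hDm : Measurable D) (hD : MemLp D 2 ω) (hl : Integrable (fun z ↦ exp (c * |z|)) l) :
    ∫ z, translationEnergy ω D z ∂l = l.real univ * (∫ x, D x ^ 2 ∂ω) +
      (∫ z, (∫ x, D (x - z) ^ 2 ∂ω) ∂l) - 2 * ∫ x, D x * measConv l D x ∂ω := by
  have hsq := integrable_sq_comp_sub_prod hω hDm hD hl
  have hmul := integrable_mul_comp_sub_prod hω hDm hD hl
  have hexpand (z : ℝ) : translationEnergy ω D z =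
      (∫ x, D x ^ 2 ∂ω) + (∫ x, D (x - z) ^ 2 ∂ω) - 2 * ∫ x, D x * D (x - z) ∂ω := by
    have hDz := hω.memLp_comp_sub hD z
    have hcross : Integrable (fun x ↦ D x * D (x - z)) ω := hD.integrable_mul hDz
    rw [translationEnergy, ← integral_const_mul, ← integral_add hD.integrable_sq hDz.integrable_sq,
      ← integral_sub (hD.integrable_sq.fun_add hDz.integrable_sq) (hcross.const_mul 2)]
    congr with x
    ring
  have hswap : ∫ z, (∫ x, D x * D (x - z) ∂ω) ∂l = ∫ x, D x * measConv l D x ∂ω := by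
    rw [← integral_integral_swap hmul]
    simp only [integral_const_mul, measConv]
  simp only [hexpand]
  rw [integral_sub ((integrable_const _).fun_add hsq.integral_prod_right)
      (hmul.integral_prod_right.const_mul 2),
    integral_add (integrable_const _) hsq.integral_prod_right, integral_const, integral_const_mul,
    hswap, smul_eq_mul]

theorem measureReal_univ_mul_integral_sq_le [SFinite ω] [IsFiniteMeasure l]
    (hω : ExpQuasiInvariant c ω) (hDm : Measurable D) (hD : MemLp D 2 ω)
    (hl : Integrable (fun z ↦ exp (c * |z|)) l) :
    l.real univ * ∫ x, D x ^ 2 ∂ω ≤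
      ∫ z, translationEnergy ω D z ∂l + 2 * ∫ x, D x * measConv l D x ∂ω := by
  have : 0 ≤ ∫ z, (∫ x, D (x - z) ^ 2 ∂ω) ∂l :=
    integral_nonneg fun z ↦ integral_nonneg fun x ↦ sq_nonneg _
  linarith [integral_translationEnergy hω hDm hD hl]

theorem integral_translationEnergy_le [SFinite ω] [IsProbabilityMeasure l]
    (hω : ExpQuasiInvariant c ω) (hDm : Measurable D) (hD : MemLp D 2 ω)
    (hl : Integrable (fun z ↦ exp (c * |z|)) l) :
    ∫ z, translationEnergy ω D z ∂l ≤ (∫ z, exp (c * |z|) ∂l - 1) * (∫ x, D x ^ 2 ∂ω) -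
      2 * ∫ x, D x * (measConv l D x - D x) ∂ω := by
  have hshift : ∫ z, (∫ x, D (x - z) ^ 2 ∂ω) ∂l ≤ (∫ z, exp (c * |z|) ∂l) * ∫ x, D x ^ 2 ∂ω := by
    rw [← integral_mul_const]
    exact integral_mono (integrable_sq_comp_sub_prod hω hDm hD hl).integral_prod_right
      (hl.mul_const _) fun z ↦ hω.integral_comp_sub_le hD.integrable_sq (fun _ ↦ sq_nonneg _) z
  have hcross : ∫ x, D x * (measConv l D x - D x) ∂ω =
      ∫ x, D x * measConv l D x ∂ω - ∫ x, D x ^ 2 ∂ω := by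
    have hDl : Integrable (fun x ↦ D x * measConv l D x) ω :=
      hD.integrable_mul (memLp_measConv hω hDm hD hl)
    rw [← integral_sub hDl hD.integrable_sq]
    congr with x
    ring
  have h := integral_translationEnergy hω hDm hD hl
  rw [probReal_univ, one_mul] at h
  linarith

theorem integral_exp_mul_abs_sub_one_le [IsProbabilityMeasure l] (hd : 0 < d) (hc : 0 ≤ c)
    (hcd : c ≤ d) (hl : Integrable (fun z ↦ exp (d * |z|)) l) :
    ∫ z, exp (c * |z|) ∂l - 1 ≤ c / d * ∫ z, exp (d * |z|) ∂l := by
  have hconvex (z : ℝ) : exp (c * |z|) ≤ 1 + c / d * exp (d * |z|) := by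
    have h := convexOn_exp.2 (mem_univ (d * |z|)) (mem_univ 0) (div_nonneg hc hd.le)
      (sub_nonneg.2 ((div_le_one hd).2 hcd)) (add_sub_cancel _ _)
    simp only [smul_eq_mul, mul_zero, add_zero, exp_zero, mul_one] at h
    rw [← mul_assoc, div_mul_cancel₀ c hd.ne'] at h
    linarith [div_nonneg hc hd.le]
  have h := integral_mono (integrable_exp_mul_abs_of_le hcd hl)
    ((integrable_const 1).fun_add (hl.const_mul (c / d))) hconvex
  rw [integral_add (integrable_const 1) (hl.const_mul _), integral_const_mul,
    integral_const, probReal_univ, one_smul] at h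
  linarith

theorem integral_sq_le_of_integral_translationEnergy_le [SFinite ω] [IsFiniteMeasure κ] [NeZero κ]
    [IsProbabilityMeasure l] (hω : ExpQuasiInvariant c ω) (hDm : Measurable D) (hD : MemLp D 2 ω)
    (hκ : Integrable (fun z ↦ exp (c * |z|)) κ) (hl : Integrable (fun z ↦ exp (c * |z|)) l)
    {A : ℝ} (hA : 0 ≤ A)
    (hκl : ∫ z, translationEnergy ω D z ∂κ ≤ A * ∫ z, translationEnergy ω D z ∂l)
    (hc : A * (∫ z, exp (c * |z|) ∂l - 1) ≤ κ.real univ / 4) :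
    ∫ x, D x ^ 2 ∂ω ≤ 16 * (1 + A ^ 2) / κ.real univ ^ 2 *
      (∫ x, measConv κ D x ^ 2 ∂ω + ∫ x, (measConv l D x - D x) ^ 2 ∂ω) := by
  set k := κ.real univ
  have hk : 0 < k := measureReal_univ_pos
  set S := ∫ x, D x ^ 2 ∂ω
  set Sκ := ∫ x, measConv κ D x ^ 2 ∂ω
  set Sl := ∫ x, (measConv l D x - D x) ^ 2 ∂ω
  have hS : 0 ≤ S := integral_nonneg fun x ↦ sq_nonneg _
  have hSκ : 0 ≤ Sκ := integral_nonneg fun x ↦ sq_nonneg _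
  have hSl : 0 ≤ Sl := integral_nonneg fun x ↦ sq_nonneg _
  have hlower := measureReal_univ_mul_integral_sq_le hω hDm hD hκ
  have hupper := integral_translationEnergy_le hω hDm hD hl
  have hDκ : 2 * ∫ x, D x * measConv κ D x ∂ω ≤ k / 4 * S + (k / 4)⁻¹ * Sκ :=
    two_mul_integral_mul_le hD (memLp_measConv hω hDm hD hκ) (by positivity)
  have hDl : 2 * (-A * ∫ x, D x * (measConv l D x - D x) ∂ω) ≤
      k / 4 * S + (k / 4)⁻¹ * (A ^ 2 * Sl) := by
    have h := two_mul_integral_mul_le hD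
      (((memLp_measConv hω hDm hD hl).sub hD).const_mul (-A)) (ε := k / 4) (by positivity)
    simpa only [Pi.sub_apply, mul_left_comm _ (-A), mul_pow, neg_sq, integral_const_mul] using h
  have habsorb : k / 4 * S ≤ (k / 4)⁻¹ * (Sκ + A ^ 2 * Sl) := by
    have := mul_le_mul_of_nonneg_left hupper hA
    have := mul_le_mul_of_nonneg_right hc hS
    linarith
  calc S = (k / 4)⁻¹ * (k / 4 * S) := by field_simp
    _ ≤ (k / 4)⁻¹ * ((k / 4)⁻¹ * (Sκ + A ^ 2 * Sl)) := by gcongr ?_ * ?_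
    _ ≤ (k / 4)⁻¹ * ((k / 4)⁻¹ * ((1 + A ^ 2) * (Sκ + Sl))) := by
        gcongr
        nlinarith [mul_nonneg (sq_nonneg A) hSκ]
    _ = 16 * (1 + A ^ 2) / k ^ 2 * (Sκ + Sl) := by field_simp; ring

theorem exists_integral_sq_le_measConv [IsFiniteMeasure κ] [NeZero κ] [IsProbabilityMeasure l]
    (hlac : l ≪ volume) (hd : 0 < d) (hκ : Integrable (fun z ↦ exp (d * |z|)) κ)
    (hl : Integrable (fun z ↦ exp (d * |z|)) l) :
    ∃ c₀ > 0, ∃ K, ∀ c, 0 ≤ c → c ≤ c₀ → ∀ (ω : Measure ℝ) [SFinite ω], ExpQuasiInvariant c ω →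
      ∀ D, Measurable D → MemLp D 2 ω → ∫ x, D x ^ 2 ∂ω ≤
        K * (∫ x, measConv κ D x ^ 2 ∂ω + ∫ x, (measConv l D x - D x) ^ 2 ∂ω) := by
  obtain ⟨C, hC, henergy⟩ := exists_translationEnergy_le_exp_mul hlac hd hl
  set E := ∫ z, exp (d * |z|) ∂l
  set A := C * ∫ z, exp (d * |z|) ∂κ
  set k := κ.real univ
  have hk : 0 < k := measureReal_univ_pos
  have : 0 ≤ E := integral_nonneg fun z ↦ (exp_pos _).le
  have hA : 0 ≤ A := mul_nonneg hC (integral_nonneg fun z ↦ (exp_pos _).le)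
  refine ⟨min (min 1 (d / 2)) (k * d / (4 * (A * E + 1))), by positivity,
    16 * (1 + A ^ 2) / k ^ 2, fun c hc0 hc ω _ hω D hDm hD ↦ ?_⟩
  have hc1 : c ≤ min 1 (d / 2) := hc.trans (min_le_left _ _)
  have hcd : c ≤ d := hc1.trans ((min_le_right _ _).trans (half_le_self hd.le))
  have hκc := integrable_exp_mul_abs_of_le hcd hκ
  refine integral_sq_le_of_integral_translationEnergy_le hω hDm hD hκc
    (integrable_exp_mul_abs_of_le hcd hl) hA ?_ ?_
  · have h := integral_mono (integrable_translationEnergy hω hDm hD hκc)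
      ((hκ.const_mul C).mul_const _) fun v ↦ henergy c hc0 hc1 ω hω D hDm hD v
    rwa [integral_mul_const, integral_const_mul] at h
  · calc A * (∫ z, exp (c * |z|) ∂l - 1) ≤ A * (c / d * E) := by
          gcongr
          exact integral_exp_mul_abs_sub_one_le hd hc0 hcd hl
      _ = c * (A * E) / d := by ring
      _ ≤ c * (A * E + 1) / d := by gcongr; exact le_add_of_nonneg_right zero_le_one
      _ ≤ k / 4 := by
          have := hc.trans (min_le_right _ _)
          rw [le_div_iff₀ (by positivity)] at this
          rw [div_le_iff₀ hd]
          linarith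

end Coercivity

section Localization

/-- The weight `exp (-c |x - R|) dx`, which localises weighted `L²` estimates around `R`. -/
noncomputable def expWeight (c R : ℝ) : Measure ℝ :=
  volume.withDensity fun x ↦ ENNReal.ofReal (exp (-c * |x - R|))

variable {l : Measure ℝ} {b c ρ : ℝ} {D f : ℝ → ℝ}

instance sFinite_expWeight (c R : ℝ) : SFinite (expWeight c R) := by
  unfold expWeight; infer_instance

theorem integrable_expWeight_iff (R : ℝ) :
    Integrable f (expWeight c R) ↔ Integrable fun x ↦ exp (-c * |x - R|) * f x := by
  rw [expWeight, integrable_withDensity_iff_integrable_smul₀' (by fun_prop) (by simp)]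
  simp only [ENNReal.toReal_ofReal (exp_pos _).le, smul_eq_mul]

theorem integral_expWeight (R : ℝ) :
    ∫ x, f x ∂expWeight c R = ∫ x, exp (-c * |x - R|) * f x := by
  rw [expWeight, integral_withDensity_eq_integral_toReal_smul₀ (by fun_prop) (by simp)]
  simp only [ENNReal.toReal_ofReal (exp_pos _).le, smul_eq_mul]

theorem expQuasiInvariant_expWeight (hc : 0 ≤ c) (R : ℝ) :
    ExpQuasiInvariant c (expWeight c R) := by
  intro z
  refine Measure.le_iff.2 fun s hs ↦ ?_
  have hpre : MeasurableSet ((fun x ↦ x - z) ⁻¹' s) := hs.preimage (measurable_sub_const z)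
  rw [Measure.map_apply (measurable_sub_const z) hs, Measure.smul_apply, expWeight,
    withDensity_apply _ hpre, withDensity_apply _ hs, ← lintegral_indicator hpre,
    ← lintegral_indicator hs, smul_eq_mul, ← lintegral_const_mul' _ _ ENNReal.ofReal_ne_top,
    ← lintegral_add_right_eq_self _ z]
  refine lintegral_mono fun x ↦ ?_
  by_cases hx : x ∈ s
  · simp only [indicator, mem_preimage, add_sub_cancel_right, hx, if_true]
    rw [← ENNReal.ofReal_mul (exp_pos _).le, ← exp_add]
    gcongr
    have h := abs_sub (x + z - R) z
    rw [show x + z - R - z = x - R by ring] at h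
    nlinarith
  · simp [indicator, hx]

theorem memLp_two_expWeight (hc : 0 ≤ c) (hbc : 2 * b < c) (hD : Measurable D)
    (hDb : D =O[⊤] fun x ↦ exp (b * |x|)) (R : ℝ) : MemLp D 2 (expWeight c R) := by
  obtain ⟨C, -, hC⟩ := isBigO_top_exp_iff.1 hDb
  refine (memLp_two_iff_integrable_sq hD.aestronglyMeasurable).2
    ((integrable_expWeight_iff R).2 ?_)
  refine ((integrable_exp_neg_mul_abs (sub_pos.2 hbc)).const_mul (C ^ 2 * exp (c * |R|))).mono'
    (Measurable.aestronglyMeasurable (by fun_prop)) (ae_of_all _ fun x ↦ ?_)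
  have htriangle : -c * |x - R| ≤ c * |R| - c * |x| := by
    nlinarith [abs_sub_abs_le_abs_sub x R]
  calc ‖exp (-c * |x - R|) * D x ^ 2‖ = exp (-c * |x - R|) * |D x| ^ 2 := by
        rw [norm_mul, norm_pow, norm_eq_abs, norm_eq_abs, abs_exp]
    _ ≤ exp (c * |R| - c * |x|) * (C * exp (b * |x|)) ^ 2 := by gcongr; exact hC x
    _ = C ^ 2 * exp (c * |R|) * exp (-(c - 2 * b) * |x|) := by
        rw [mul_pow, ← exp_nat_mul, mul_assoc, mul_left_comm, ← exp_add, ← exp_add]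
        push_cast
        ring_nf

theorem integrable_exp_mul_mul_sq (hbc : 2 * b < c) (hρ : c < 2 * ρ) (hf : Measurable f)
    (hfb : f =O[⊤] fun x ↦ exp (b * |x|)) (hfρ : f =O[⊤] fun x ↦ exp (-ρ * x)) :
    Integrable fun x ↦ exp (c * x) * f x ^ 2 := by
  obtain ⟨C, hC0, hC⟩ := isBigO_top_exp_iff.1 hfb
  obtain ⟨C', hC'0, hC'⟩ := isBigO_top_exp_iff.1 hfρ
  have hbound (x : ℝ) : exp (c * x) * f x ^ 2 ≤
      max C C' ^ 2 * exp (-min (c - 2 * b) (2 * ρ - c) * |x|) := by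
    have hsq {a y : ℝ} (ha : |f x| ≤ a * exp y) (_ : 0 ≤ a) (hle : a ≤ max C C')
        (hy : c * x + 2 * y ≤ -min (c - 2 * b) (2 * ρ - c) * |x|) :
        exp (c * x) * f x ^ 2 ≤ max C C' ^ 2 * exp (-min (c - 2 * b) (2 * ρ - c) * |x|) :=
      calc exp (c * x) * f x ^ 2 = exp (c * x) * |f x| ^ 2 := by rw [sq_abs]
        _ ≤ exp (c * x) * (max C C' * exp y) ^ 2 := by
            gcongr
            exact ha.trans (by gcongr)
        _ = max C C' ^ 2 * exp (c * x + 2 * y) := by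
            rw [mul_pow, ← exp_nat_mul, exp_add]; push_cast; ring
        _ ≤ _ := by gcongr
    rcases le_total 0 x with hx | hx
    · refine hsq (hC' x) hC'0 (le_max_right _ _) ?_
      rw [abs_of_nonneg hx]
      nlinarith [min_le_right (c - 2 * b) (2 * ρ - c)]
    · refine hsq (hC x) hC0 (le_max_left _ _) ?_
      rw [abs_of_nonpos hx]
      nlinarith [min_le_left (c - 2 * b) (2 * ρ - c)]
  exact ((integrable_exp_neg_mul_abs (lt_min (sub_pos.2 hbc) (sub_pos.2 hρ))).const_mul _).mono'
    (Measurable.aestronglyMeasurable (by fun_prop))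
    (ae_of_all _ fun x ↦ by rw [norm_of_nonneg (by positivity)]; exact hbound x)

theorem exists_integral_sq_expWeight_le (hc : 0 ≤ c) (hbc : 2 * b < c) (hρ : c < 2 * ρ)
    (hf : Measurable f) (hfb : f =O[⊤] fun x ↦ exp (b * |x|))
    (hfρ : f =O[⊤] fun x ↦ exp (-ρ * x)) :
    ∃ K ≥ 0, ∀ R, ∫ x, f x ^ 2 ∂expWeight c R ≤ K * exp (-c * R) := by
  refine ⟨∫ x, exp (c * x) * f x ^ 2, integral_nonneg fun x ↦ by positivity, fun R ↦ ?_⟩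
  rw [← integral_mul_const, integral_expWeight]
  refine integral_mono ((integrable_expWeight_iff R).1
      (memLp_two_expWeight hc hbc hf hfb R).integrable_sq)
    ((integrable_exp_mul_mul_sq hbc hρ hf hfb hfρ).mul_const _) fun x ↦ ?_
  calc exp (-c * |x - R|) * f x ^ 2 ≤ exp (c * x + -c * R) * f x ^ 2 := by
        gcongr
        nlinarith [neg_abs_le (x - R)]
    _ = exp (c * x) * f x ^ 2 * exp (-c * R) := by rw [exp_add]; ring

theorem sq_measConv_le_integral_expWeight {M : ℝ≥0∞} (hM : M ≠ ∞)
    (hlM : l ≤ M • volume) (hl : Integrable (fun z ↦ exp (c * |z|)) l) (hD : Measurable D)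
    {R : ℝ} (hDR : MemLp D 2 (expWeight c R)) :
    measConv l D R ^ 2 ≤
      (∫ z, exp (c * |z|) ∂l) * (M.toReal * ∫ x, D x ^ 2 ∂expWeight c R) := by
  have hsplit (z : ℝ) : exp (c / 2 * |z|) * (exp (-(c / 2) * |z|) * D (R - z)) = D (R - z) := by
    rw [← mul_assoc, ← exp_add]
    simp
  have hint : Integrable fun z ↦ exp (-c * |z|) * D (R - z) ^ 2 := by
    convert ((integrable_expWeight_iff R).1 hDR.integrable_sq).comp_sub_left R using 3 with z
    rw [sub_sub_cancel_left, abs_neg]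
  have hsq (z : ℝ) : (exp (-(c / 2) * |z|) * D (R - z)) ^ 2 = exp (-c * |z|) * D (R - z) ^ 2 := by
    rw [mul_pow, ← exp_nat_mul]
    push_cast
    ring_nf
  have hsq' (z : ℝ) : exp (c / 2 * |z|) ^ 2 = exp (c * |z|) := by
    rw [← exp_nat_mul]
    push_cast
    ring_nf
  have hintM := hint.smul_measure hM
  calc measConv l D R ^ 2
      = (∫ z, exp (c / 2 * |z|) * (exp (-(c / 2) * |z|) * D (R - z)) ∂l) ^ 2 := by
        simp only [hsplit, measConv]
    _ ≤ (∫ z, exp (c / 2 * |z|) ^ 2 ∂l) * ∫ z, (exp (-(c / 2) * |z|) * D (R - z)) ^ 2 ∂l := by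
        refine sq_integral_mul_le ((memLp_two_iff_integrable_sq
          (Measurable.aestronglyMeasurable (by fun_prop))).2 ?_) ((memLp_two_iff_integrable_sq
          (Measurable.aestronglyMeasurable (by fun_prop))).2 ?_)
        · simpa only [hsq'] using hl
        · simpa only [hsq] using hintM.mono_measure hlM
    _ ≤ (∫ z, exp (c * |z|) ∂l) * ∫ z, exp (-c * |z|) * D (R - z) ^ 2 ∂(M • volume) := by
        simp only [hsq', hsq]
        gcongr ?_ * ?_
        exact integral_mono_measure hlM (ae_of_all _ fun z ↦ by positivity) hintM
    _ = (∫ z, exp (c * |z|) ∂l) * (M.toReal * ∫ x, D x ^ 2 ∂expWeight c R) := by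
        rw [integral_smul_measure, smul_eq_mul, integral_expWeight,
          ← integral_sub_left_eq_self _ volume R]
        simp only [sub_sub_cancel, abs_sub_comm R]

end Localization

section Renewal

variable {l κ : Measure ℝ} {c d ρ : ℝ} {M : ℝ≥0∞} {D F : ℝ → ℝ}

theorem exp_neg_mul_isBigO_exp_neg_mul {a b : ℝ} (hab : a ≤ b) :
    (fun x ↦ exp (-b * x)) =O[atTop] fun x ↦ exp (-a * x) := by
  refine IsBigO.of_bound 1 ?_
  filter_upwards [eventually_ge_atTop 0] with x hx
  rw [one_mul, norm_eq_abs, norm_eq_abs, abs_exp, abs_exp]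
  gcongr

theorem exists_isBigO_atTop_exp_neg_of_measConv [IsFiniteMeasure κ] [NeZero κ]
    [IsProbabilityMeasure l] (hM : M ≠ ∞) (hlM : l ≤ M • volume) (hd : 0 < d)
    (hκ : Integrable (fun z ↦ exp (d * |z|)) κ) (hl : Integrable (fun z ↦ exp (d * |z|)) l)
    (hρ : 0 < ρ) :
    ∃ c > 0, c ≤ min 1 d ∧ ∀ D, Measurable D → (D =O[⊤] fun x ↦ exp (c / 4 * |x|)) →
      (measConv κ D =O[⊤] fun x ↦ exp (-ρ * x)) →
      ((fun x ↦ measConv l D x - D x) =O[⊤] fun x ↦ exp (-ρ * x)) →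
      D =O[atTop] fun x ↦ exp (-(c / 2) * x) := by
  obtain ⟨c₀, hc₀, K, hcoercive⟩ := exists_integral_sq_le_measConv
    (Measure.absolutelyContinuous_of_le_smul hlM) hd hκ hl
  set c := min (min 1 d) (min c₀ ρ)
  have hc : 0 < c := by positivity
  have hcd : c ≤ d := (min_le_left _ _).trans (min_le_right _ _)
  have hcc₀ : c ≤ c₀ := (min_le_right _ _).trans (min_le_left _ _)
  have hcρ : c ≤ ρ := (min_le_right _ _).trans (min_le_right _ _)
  have hκc := integrable_exp_mul_abs_of_le (c := c / 4) (by linarith) hκ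
  have hlc := integrable_exp_mul_abs_of_le (c := c / 4) (by linarith) hl
  refine ⟨c, hc, min_le_left _ _, fun D hDm hDb hκD hlD ↦ ?_⟩
  have hDR (R : ℝ) : MemLp D 2 (expWeight c R) :=
    memLp_two_expWeight hc.le (by linarith) hDm hDb R
  have hlDb := measConv_isBigO_exp_mul_abs (by positivity) hlc hDb
  obtain ⟨K₁, _, hK₁⟩ := exists_integral_sq_expWeight_le (b := c / 4) hc.le (by linarith)
    (by linarith) (stronglyMeasurable_measConv hDm).measurable
    (measConv_isBigO_exp_mul_abs (by positivity) hκc hDb) hκD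
  obtain ⟨K₂, _, hK₂⟩ := exists_integral_sq_expWeight_le (b := c / 4) hc.le (by linarith)
    (by linarith) ((stronglyMeasurable_measConv hDm).measurable.sub hDm) (hlDb.sub hDb) hlD
  have hsq : (fun R ↦ measConv l D R ^ 2) =O[atTop] fun R ↦ exp (-(c / 2) * R) ^ 2 := by
    refine IsBigO.of_bound ((∫ z, exp (c * |z|) ∂l) * (M.toReal * (|K| * (K₁ + K₂))))
      (Eventually.of_forall fun R ↦ ?_)
    rw [norm_of_nonneg (sq_nonneg _), norm_of_nonneg (by positivity), ← exp_nat_mul]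
    calc measConv l D R ^ 2
        ≤ (∫ z, exp (c * |z|) ∂l) * (M.toReal * ∫ x, D x ^ 2 ∂expWeight c R) :=
          sq_measConv_le_integral_expWeight hM hlM (integrable_exp_mul_abs_of_le hcd hl) hDm (hDR R)
      _ ≤ (∫ z, exp (c * |z|) ∂l) *
            (M.toReal * (|K| * (K₁ * exp (-c * R) + K₂ * exp (-c * R)))) := by
          gcongr ?_ * (_ * ?_)
          refine (hcoercive c hc.le hcc₀ _ (expQuasiInvariant_expWeight hc.le R) D hDm
            (hDR R)).trans ?_
          gcongr
          exacts [le_abs_self K, hK₁ R, hK₂ R]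
      _ = _ := by push_cast; ring_nf
  have hconv : measConv l D =O[atTop] fun R ↦ exp (-(c / 2) * R) := hsq.of_pow two_ne_zero
  simpa using hconv.sub ((hlD.mono le_top).trans (exp_neg_mul_isBigO_exp_neg_mul (by linarith)))

theorem measConv_sub_affine [IsFiniteMeasure l] (hid : Integrable (fun z ↦ z) l) {x : ℝ}
    (hF : Integrable (fun z ↦ F (x - z)) l) (m a : ℝ) :
    measConv l (fun x ↦ F x - (m * x + a)) x =
      measConv l F x - (l.real univ * (m * x + a) - m * ∫ z, z ∂l) := by
  have haffine : Integrable (fun z ↦ m * x + a - m * z) l :=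
    (integrable_const _).sub (hid.const_mul m)
  calc measConv l (fun x ↦ F x - (m * x + a)) x
      = ∫ z, (F (x - z) - (m * x + a - m * z)) ∂l := integral_congr_ae (ae_of_all _ fun z ↦ by ring)
    _ = measConv l F x - (l.real univ * (m * x + a) - m * ∫ z, z ∂l) := by
      rw [integral_sub hF haffine, integral_sub (integrable_const _) (hid.const_mul m),
        integral_const, integral_const_mul, smul_eq_mul, measConv]

theorem affine_isBigO_top_exp_mul_abs {b : ℝ} (hb : 0 < b) (m a : ℝ) :
    (fun x ↦ m * x + a) =O[⊤] fun x ↦ exp (b * |x|) := by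
  have hid := pow_isBigO_top_exp_mul_abs 1 hb
  have hone := pow_isBigO_top_exp_mul_abs 0 hb
  simpa using (hid.const_mul_left m).add (hone.const_mul_left a)

theorem nullSingletonClass_of_absolutelyContinuous {α : Type*} [MeasurableSpace α] {μ ν : Measure α}
    [NullSingletonClass μ] (hνμ : ν ≪ μ) : NullSingletonClass ν :=
  ⟨fun x ↦ hνμ (measure_singleton x)⟩

theorem exists_affine_sub_isBigO_of_measConv_sub [IsProbabilityMeasure l] (hM : M ≠ ∞)
    (hlM : l ≤ M • volume) (hmean : ∫ z, z ∂l = 0) (hd : 0 < d)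
    (hl : Integrable (fun z ↦ exp (d * |z|)) l) (hρ : 0 < ρ) :
    ∃ b > 0, ∀ F, Continuous F → (F =O[⊤] fun x ↦ exp (b * |x|)) →
      ((fun x ↦ measConv l F x - F x) =O[⊤] fun x ↦ exp (-ρ * x)) →
      ∃ m a, ∃ η > 0, η < 1 ∧ (fun x ↦ F x - (m * x + a)) =O[atTop] fun x ↦ exp (-η * x) := by
  set κ := taylorMeasure l
  have : IsFiniteMeasure κ := isFiniteMeasure_taylorMeasure hd hl
  have : NullSingletonClass l :=
    nullSingletonClass_of_absolutelyContinuous (Measure.absolutelyContinuous_of_le_smul hlM)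
  have : NeZero κ := neZero_taylorMeasure hd hl (by simp)
  obtain ⟨d', hd', hd'd⟩ := exists_between hd
  have hκ := integrable_exp_mul_abs_taylorMeasure hd'.le hd'd hl
  have hlid := integrable_of_integrable_exp_mul_abs hd hl
  have hκid := integrable_of_integrable_exp_mul_abs hd' hκ
  have hl' := integrable_exp_mul_abs_of_le hd'd.le hl
  obtain ⟨c, hc, hcle, htauber⟩ :=
    exists_isBigO_atTop_exp_neg_of_measConv hM hlM hd' hκ hl' hρ
  have hc1 : c ≤ 1 := hcle.trans (min_le_left _ _)
  have hcd : c ≤ d' := hcle.trans (min_le_right _ _)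
  refine ⟨c / 4, by positivity, fun F hF hFb hFρ ↦ ?_⟩
  obtain ⟨m, a, hκF⟩ := exists_measConv_taylorMeasure_sub_isBigO hmean (by positivity)
    (by linarith) hl hF hFb hρ hFρ
  have hFl (x : ℝ) : Integrable (fun z ↦ F (x - z)) l := integrable_comp_sub (by positivity)
    hF.measurable hFb (integrable_exp_mul_abs_of_le (by linarith) hl) x
  have hFκ (x : ℝ) : Integrable (fun z ↦ F (x - z)) κ := integrable_comp_sub (by positivity)
    hF.measurable hFb (integrable_exp_mul_abs_of_le (by linarith) hκ) x
  have hk : κ.real univ ≠ 0 := measureReal_univ_ne_zero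
  set m' := m / κ.real univ
  set a' := (a + m' * ∫ z, z ∂κ) / κ.real univ
  refine ⟨m', a', c / 2, by positivity, by linarith, htauber _ (by fun_prop) ?_ ?_ ?_⟩
  · exact hFb.sub (affine_isBigO_top_exp_mul_abs (by positivity) m' a')
  · refine hκF.congr_left fun x ↦ ?_
    rw [measConv_sub_affine hκid (hFκ x)]
    simp only [a', m']
    field_simp
    ring
  · refine hFρ.congr_left fun x ↦ ?_
    rw [measConv_sub_affine hlid (hFl x), hmean, probReal_univ]
    ring

end Renewal

section CumulativeFunction

variable {μ l ν : Measure ℝ} {η x : ℝ} {M : ℝ≥0∞}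

theorem sigmaFinite_of_measure_Iic_lt_top (hν : ∀ x, ν (Iic x) < ∞) : SigmaFinite ν :=
  ⟨⟨⟨fun n : ℕ ↦ Iic (n : ℝ), fun _ ↦ trivial, fun n ↦ hν n, iUnion_eq_univ_iff.2 exists_nat_ge⟩⟩⟩

theorem measurable_measureReal_Iic (hν : ∀ x, ν (Iic x) < ∞) :
    Measurable fun x ↦ ν.real (Iic x) :=
  Monotone.measurable fun _ _ hab ↦ measureReal_mono (Iic_subset_Iic.2 hab) (hν _).ne

theorem continuous_measureReal_Iic [NullSingletonClass ν] (hν : ∀ x, ν (Iic x) < ∞) :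
    Continuous fun x ↦ ν.real (Iic x) := by
  refine continuous_iff_continuousAt.2 fun x ↦ ?_
  have hint : IntegrableOn (fun _ ↦ (1 : ℝ)) (Iic (x + 1)) ν := by simp [hν]
  simpa using hint.continuousOn_Iic_primitive_Iic.continuousAt
    (Iic_mem_nhds (lt_add_one x))

theorem measure_Iic_le_exp_mul_lintegral (hη : 0 ≤ η) :
    ν (Iic x) ≤ .ofReal (exp (η * x)) * ∫⁻ t, .ofReal (exp (-η * t)) ∂ν := by
  have hone (t : ℝ) : (Iic x).indicator 1 t ≤
      ENNReal.ofReal (exp (η * x)) * ENNReal.ofReal (exp (-η * t)) := by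
    refine indicator_apply_le' (fun ht ↦ ?_) (fun _ ↦ zero_le)
    rw [← ENNReal.ofReal_mul (exp_nonneg _), ← exp_add, Pi.one_apply, ENNReal.one_le_ofReal]
    exact one_le_exp (by linarith [mul_le_mul_of_nonneg_left (mem_Iic.1 ht) hη])
  rw [← lintegral_indicator_one measurableSet_Iic, ← lintegral_const_mul _ (by fun_prop)]
  exact lintegral_mono hone

theorem measureReal_Iic_isBigO_exp (hη : 0 ≤ η) (hν : ∫⁻ t, .ofReal (exp (-η * t)) ∂ν ≠ ∞) :
    (fun x ↦ ν.real (Iic x)) =O[⊤] fun x ↦ exp (η * x) := by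
  refine isBigO_top_exp_iff.2 ⟨(∫⁻ t, .ofReal (exp (-η * t)) ∂ν).toReal,
    ENNReal.toReal_nonneg, fun x ↦ ?_⟩
  rw [abs_of_nonneg measureReal_nonneg, mul_comm]
  simpa [Measure.real, ENNReal.toReal_ofReal, exp_nonneg] using
    ENNReal.toReal_mono (by finiteness) (measure_Iic_le_exp_mul_lintegral (x := x) hη)

theorem lintegral_exp_conv [SFinite l] (c : ℝ) :
    ∫⁻ x, .ofReal (exp (c * x)) ∂(μ ∗ l) =
      (∫⁻ y, .ofReal (exp (c * y)) ∂μ) * ∫⁻ z, .ofReal (exp (c * z)) ∂l := by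
  rw [Measure.lintegral_conv (by fun_prop), ← lintegral_mul_const _ (by fun_prop)]
  refine lintegral_congr fun y ↦ ?_
  rw [← lintegral_const_mul _ (by fun_prop)]
  simp only [mul_add, exp_add, ENNReal.ofReal_mul (exp_nonneg _)]

theorem conv_apply_eq_lintegral_preimage [SFinite l] {s : Set ℝ} (hs : MeasurableSet s) :
    (μ ∗ l) s = ∫⁻ y, l ((fun z ↦ y + z) ⁻¹' s) ∂μ := by
  rw [← lintegral_indicator_one hs, Measure.lintegral_conv (measurable_one.indicator hs)]
  refine lintegral_congr fun y ↦ ?_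
  rw [← lintegral_indicator_one (measurable_const_add y hs)]
  rfl

theorem measConv_measureReal_Iic [SFinite l] (hμ : ∀ x, μ (Iic x) < ∞) (x : ℝ) :
    measConv l (fun t ↦ μ.real (Iic t)) x = (μ ∗ l).real (Iic x) := by
  have := sigmaFinite_of_measure_Iic_lt_top hμ
  have hmeas : Measurable fun z ↦ μ (Iic (x - z)) :=
    Antitone.measurable fun _ _ hab ↦ measure_mono (Iic_subset_Iic.2 (by linarith))
  rw [measConv, Measure.real, Measure.conv_comm, conv_apply_eq_lintegral_preimage measurableSet_Iic]
  simp only [preimage_const_add_Iic]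
  exact integral_toReal hmeas.aemeasurable (ae_of_all _ fun z ↦ hμ _)

theorem measure_Ioc_le_of_le_smul_volume (hlM : l ≤ M • volume) (hη : 0 ≤ η) (a b : ℝ) :
    l (Ioc a b) ≤ (M * .ofReal (b - a)) ^ (2⁻¹ : ℝ) *
      (∫⁻ z, .ofReal (exp (-(2 * η) * z)) ∂l) ^ (2⁻¹ : ℝ) * .ofReal (exp (η * b)) := by
  set E := ∫⁻ z, ENNReal.ofReal (exp (-(2 * η) * z)) ∂l
  have hlength : l (Ioc a b) ≤ M * .ofReal (b - a) := by simpa using hlM (Ioc a b)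
  have htail : l (Ioc a b) ≤ .ofReal (exp (2 * η * b)) * E :=
    (measure_mono Ioc_subset_Iic_self).trans (measure_Iic_le_exp_mul_lintegral (by positivity))
  have hsqrt : ENNReal.ofReal (exp (2 * η * b)) ^ (2⁻¹ : ℝ) = .ofReal (exp (η * b)) := by
    rw [ENNReal.ofReal_rpow_of_pos (exp_pos _), ← exp_mul]
    ring_nf
  calc l (Ioc a b) = l (Ioc a b) ^ (2⁻¹ : ℝ) * l (Ioc a b) ^ (2⁻¹ : ℝ) := by
        rw [← ENNReal.rpow_add_of_nonneg _ _ (by norm_num) (by norm_num)]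
        norm_num
    _ ≤ (M * .ofReal (b - a)) ^ (2⁻¹ : ℝ) * (.ofReal (exp (2 * η * b)) * E) ^ (2⁻¹ : ℝ) := by
        gcongr
    _ = _ := by
        rw [ENNReal.mul_rpow_of_nonneg _ E (by norm_num), hsqrt]
        ring

theorem conv_Ioc_le_of_le_smul_volume [SFinite l] (hlM : l ≤ M • volume) (hη : 0 ≤ η) (a b : ℝ) :
    (μ ∗ l) (Ioc a b) ≤ (M * .ofReal (b - a)) ^ (2⁻¹ : ℝ) *
      (∫⁻ z, .ofReal (exp (-(2 * η) * z)) ∂l) ^ (2⁻¹ : ℝ) *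
        (.ofReal (exp (η * b)) * ∫⁻ y, .ofReal (exp (-η * y)) ∂μ) := by
  rw [conv_apply_eq_lintegral_preimage measurableSet_Ioc, ← lintegral_const_mul _ (by fun_prop),
    ← lintegral_const_mul _ (by fun_prop)]
  refine lintegral_mono fun y ↦ ?_
  have h := measure_Ioc_le_of_le_smul_volume hlM hη (a - y) (b - y)
  rw [← ENNReal.ofReal_mul (exp_nonneg _), ← exp_add]
  simp only [preimage_const_add_Ioc]
  convert h using 4 <;> ring_nf

theorem exists_conv_real_Ioc_le [SFinite l] (hM : M ≠ ∞) (hlM : l ≤ M • volume) (hη : 0 ≤ η)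
    (hl : ∫⁻ z, .ofReal (exp (-(2 * η) * z)) ∂l ≠ ∞)
    (hμ : ∫⁻ y, .ofReal (exp (-η * y)) ∂μ ≠ ∞) :
    ∃ C ≥ 0, ∀ a b, (μ ∗ l).real (Ioc a b) ≤ C * √(b - a) * exp (η * b) := by
  set E := ∫⁻ z, ENNReal.ofReal (exp (-(2 * η) * z)) ∂l
  set T := ∫⁻ y, ENNReal.ofReal (exp (-η * y)) ∂μ
  refine ⟨√M.toReal * √E.toReal * T.toReal, by positivity, fun a b ↦ ?_⟩
  rcases le_total b a with hba | hab
  · simp [Ioc_eq_empty_of_le hba, sqrt_eq_zero_of_nonpos (sub_nonpos.2 hba)]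
  have h := ENNReal.toReal_mono (by finiteness) (conv_Ioc_le_of_le_smul_volume hlM hη a b (μ := μ))
  simp only [ENNReal.toReal_mul, ← ENNReal.toReal_rpow, ← one_div, ← sqrt_eq_rpow,
    ENNReal.toReal_ofReal (exp_nonneg _), ENNReal.toReal_ofReal (sub_nonneg.2 hab),
    sqrt_mul ENNReal.toReal_nonneg] at h
  exact h.trans_eq (by ring)

end CumulativeFunction

section Gronwall

theorem bddAbove_range_of_sub_le_summable_mul {t a : ℕ → ℝ} (ht : Monotone t) (ht0 : ∀ n, 0 ≤ t n)
    (ha0 : ∀ n, 0 ≤ a n) (ha : Summable a) (h : ∀ n, t (n + 1) - t n ≤ a n * t (n + 1)) :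
    BddAbove (range t) := by
  obtain ⟨J, hJ⟩ : ∃ J, ∑' i, a (i + J) ≤ 1 / 2 :=
    ((tendsto_sum_nat_add a).eventually_le_const one_half_pos).exists
  have htail (n : ℕ) : t (n + J) - t J ≤ 1 / 2 * t (n + J) := by
    calc t (n + J) - t J = ∑ i ∈ Finset.range n, (t (i + 1 + J) - t (i + J)) := by
          rw [Finset.sum_range_sub (fun i ↦ t (i + J)), zero_add]
      _ ≤ ∑ i ∈ Finset.range n, a (i + J) * t (n + J) := by
          refine Finset.sum_le_sum fun i hi ↦ ?_
          rw [add_right_comm]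
          refine (h (i + J)).trans (mul_le_mul_of_nonneg_left (ht ?_) (ha0 _))
          have := Finset.mem_range.1 hi
          omega
      _ = (∑ i ∈ Finset.range n, a (i + J)) * t (n + J) := (Finset.sum_mul ..).symm
      _ ≤ 1 / 2 * t (n + J) := by
          gcongr
          · exact ht0 _
          · exact (((summable_nat_add_iff J).2 ha).sum_le_tsum _ fun _ _ ↦ ha0 _).trans hJ
  refine ⟨2 * t J, ?_⟩
  rintro _ ⟨n, rfl⟩
  linarith [htail n, ht (Nat.le_add_right n J)]

end Gronwall

section Drift

/-- The continuous ramp which is `B` on `(-∞, 0]`, affine on `[0, B]` and `0` on `[B, ∞)`. It is the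
test function of the drift argument: above `0` the chain is nearly a centred random walk, which
raises the mean of the ramp near its convex corner `B` only. -/
def ramp (B t : ℝ) : ℝ := max (B - t) 0 - max (-t) 0

@[fun_prop]
theorem continuous_ramp (B : ℝ) : Continuous (ramp B) := by unfold ramp; fun_prop

theorem ramp_of_le {B t : ℝ} (h : t ≤ B) : ramp B t = B - max t 0 := by
  rw [ramp]; grind

theorem ramp_of_ge {B t : ℝ} (hB : 0 ≤ B) (h : B ≤ t) : ramp B t = 0 := by
  rw [ramp]; grind

theorem ramp_nonneg {B : ℝ} (hB : 0 ≤ B) (t : ℝ) : 0 ≤ ramp B t := by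
  rw [ramp]; grind

theorem ramp_le {B : ℝ} (hB : 0 ≤ B) (t : ℝ) : ramp B t ≤ B := by
  rw [ramp]; grind

variable {l : Measure ℝ} {η K B : ℝ}

theorem integral_max_zero_pos [IsProbabilityMeasure l] [NullSingletonClass l]
    (hl : Integrable (fun z ↦ z) l) (hmean : ∫ z, z ∂l = 0) : 0 < ∫ z, max z 0 ∂l := by
  have habs : ∫ z, |z| ∂l = 2 * ∫ z, max z 0 ∂l := by
    rw [← integral_const_mul, ← sub_eq_zero, ← integral_sub hl.abs (hl.pos_part.const_mul 2),
      ← neg_eq_zero, ← integral_neg, ← hmean]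
    congr with z
    grind
  have hsupport : (Function.support fun z : ℝ ↦ |z|) = {0}ᶜ := by ext; simp
  have hpos : 0 < ∫ z, |z| ∂l := by
    rw [integral_pos_iff_support_of_nonneg (fun z ↦ abs_nonneg z) hl.abs, hsupport,
      measure_compl (measurableSet_singleton 0) (by simp)]
    simp
  linarith

theorem integral_ramp_add [IsProbabilityMeasure l] (hl : Integrable (fun z ↦ z) l)
    (hmean : ∫ z, z ∂l = 0) (H : ℝ) :
    ∫ z, ramp B (H + z) ∂l =
      B - H + ∫ z, max (z - (B - H)) 0 ∂l - ∫ z, max (-H - z) 0 ∂l := by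
  have hsub : Integrable (fun z ↦ B - H - z) l := (integrable_const _).sub hl
  have hup : Integrable (fun z ↦ max (z - (B - H)) 0) l := (hl.sub (integrable_const _)).pos_part
  have hdown : Integrable (fun z ↦ max (-H - z) 0) l := ((integrable_const _).sub hl).pos_part
  calc ∫ z, ramp B (H + z) ∂l
      = ∫ z, (B - H - z + max (z - (B - H)) 0 - max (-H - z) 0) ∂l := by
        congr with z
        rw [ramp]
        grind
    _ = _ := by
        rw [integral_sub (hsub.fun_add hup) hdown, integral_add hsub hup,
          integral_sub (integrable_const _) hl, hmean]
        simp

theorem integral_max_neg_sub_le (hη : 0 < η) (hl : Integrable (fun z ↦ exp (η * |z|)) l) (H : ℝ) :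
    ∫ z, max (-H - z) 0 ∂l ≤ (∫ z, exp (η * |z|) ∂l) / η * exp (-η * H) := by
  rw [div_mul_eq_mul_div, le_div_iff₀ hη, ← integral_mul_const, ← integral_mul_const]
  refine integral_mono_of_nonneg (ae_of_all _ fun z ↦ by positivity) (hl.mul_const _)
    (ae_of_all _ fun z ↦ ?_)
  have hz : -H - z ≤ -H + |z| := by linarith [neg_le_abs z]
  calc max (-H - z) 0 * η ≤ exp (η * (-H - z)) := by
        rcases le_total (-H - z) 0 with h | h
        · rw [max_eq_right h, zero_mul]
          positivity
        · rw [max_eq_left h]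
          linarith [add_one_le_exp (η * (-H - z))]
    _ ≤ exp (η * (-H + |z|)) := by gcongr
    _ = exp (η * |z|) * exp (-η * H) := by rw [← exp_add]; ring_nf

theorem le_integral_max_sub [IsProbabilityMeasure l] {b κ : ℝ} (hl : Integrable (fun z ↦ z) l)
    (hbκ : b ≤ κ) (hκ : 0 ≤ κ) : ∫ z, max z 0 ∂l - κ ≤ ∫ z, max (z - b) 0 ∂l := by
  calc ∫ z, max z 0 ∂l - κ = ∫ z, (max z 0 - κ) ∂l := by
        rw [integral_sub hl.pos_part (integrable_const _)]
        simp
    _ ≤ ∫ z, max (z - b) 0 ∂l := by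
        refine integral_mono (hl.pos_part.sub (integrable_const _))
          (hl.sub (integrable_const _)).pos_part fun z ↦ ?_
        grind

theorem ramp_add_indicator_le_integral [IsProbabilityMeasure l] (hη : 0 < η)
    (hl : Integrable (fun z ↦ exp (η * |z|)) l) (hmean : ∫ z, z ∂l = 0) {y H : ℝ}
    (hyB : y ≤ B) (hle : max y 0 ≤ H) (hge : H ≤ max y 0 + K * exp (-η * H)) :
    ramp B y + (Icc (B - (∫ z, max z 0 ∂l) / 2) B).indicator
        (fun _ ↦ (∫ z, max z 0 ∂l) / 2) y ≤
      ∫ z, ramp B (H + z) ∂l + ((∫ z, exp (η * |z|) ∂l) / η + K) * exp (-η * H) := by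
  have hlid := integrable_of_integrable_exp_mul_abs hη hl
  set κ := (∫ z, max z 0 ∂l) / 2 with hκ_def
  have hκ : 0 ≤ κ := by positivity
  have hcorner : (Icc (B - κ) B).indicator (fun _ ↦ κ) y ≤ ∫ z, max (z - (B - H)) 0 ∂l := by
    refine indicator_apply_le' (fun hy ↦ ?_) fun _ ↦ by positivity
    linarith [le_integral_max_sub (b := B - H) hlid (by linarith [hy.1, le_max_left y 0]) hκ]
  rw [ramp_of_le hyB, integral_ramp_add hlid hmean, add_mul]
  linarith [integral_max_neg_sub_le hη hl H]

end Drift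

section ExponentialMoment

theorem lintegral_map_conv {l ν : Measure ℝ} [SFinite l] {h : ℝ → ℝ} (hh : Measurable h)
    {g : ℝ → ℝ≥0∞} (hg : Measurable g) :
    ∫⁻ x, g x ∂(ν.map h ∗ l) = ∫⁻ y, ∫⁻ z, g (h y + z) ∂l ∂ν := by
  rw [Measure.lintegral_conv hg, lintegral_map _ hh]
  exact Measurable.lintegral_prod_right' (f := fun p : ℝ × ℝ ↦ g (p.1 + p.2)) (by fun_prop)

variable {l ν : Measure ℝ} [IsProbabilityMeasure l] {η K B : ℝ} {h : ℝ → ℝ}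

theorem lintegral_ramp_eq (hB : 0 ≤ B) (hh : Measurable h) (hinv : ν.map h ∗ l = ν) :
    ∫⁻ y, .ofReal (ramp B y) ∂ν = ∫⁻ y, .ofReal (∫ z, ramp B (h y + z) ∂l) ∂ν := by
  nth_rw 1 [← hinv]
  rw [lintegral_map_conv hh (by fun_prop)]
  refine lintegral_congr fun y ↦
    (ofReal_integral_eq_lintegral_ofReal ?_ (ae_of_all _ fun z ↦ ramp_nonneg hB _)).symm
  refine (integrable_const B).mono' (by fun_prop) (ae_of_all _ fun z ↦ ?_)
  rw [norm_eq_abs, abs_of_nonneg (ramp_nonneg hB _)]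
  exact ramp_le hB _

theorem ofReal_ramp_add_indicator_le (hη : 0 < η) (hl : Integrable (fun z ↦ exp (η * |z|)) l)
    (hmean : ∫ z, z ∂l = 0) (hK : 0 ≤ K) (hB : 0 ≤ B) {y H : ℝ} (hyB : y ≤ B)
    (hle : max y 0 ≤ H) (hge : H ≤ max y 0 + K * exp (-η * H)) :
    ENNReal.ofReal (ramp B y) + (Icc (B - (∫ z, max z 0 ∂l) / 2) B).indicator
        (fun _ ↦ .ofReal ((∫ z, max z 0 ∂l) / 2)) y ≤
      .ofReal (∫ z, ramp B (H + z) ∂l) +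
        .ofReal ((∫ z, exp (η * |z|) ∂l) / η + K) * .ofReal (exp (-η * H)) := by
  set κ := (∫ z, max z 0 ∂l) / 2
  have hκ : 0 ≤ κ := by positivity
  have hind : (Icc (B - κ) B).indicator (fun _ ↦ ENNReal.ofReal κ) y =
      .ofReal ((Icc (B - κ) B).indicator (fun _ ↦ κ) y) := by
    by_cases hy : y ∈ Icc (B - κ) B <;> simp [hy]
  rw [hind, ← ENNReal.ofReal_mul (by positivity), ← ENNReal.ofReal_add (ramp_nonneg hB y)
    (indicator_nonneg (fun _ _ ↦ hκ) y),
    ← ENNReal.ofReal_add (integral_nonneg fun z ↦ ramp_nonneg hB _) (by positivity)]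
  exact ENNReal.ofReal_le_ofReal (ramp_add_indicator_le_integral hη hl hmean hyB hle hge)

theorem mul_measure_Icc_le_setLIntegral (hη : 0 < η)
    (hl : Integrable (fun z ↦ exp (η * |z|)) l) (hmean : ∫ z, z ∂l = 0) (hK : 0 ≤ K)
    (hh : Measurable h) (hle : ∀ y, max y 0 ≤ h y)
    (hge : ∀ y, h y ≤ max y 0 + K * exp (-η * h y)) (hinv : ν.map h ∗ l = ν)
    (hν : ∀ x, ν (Iic x) < ∞) (hB : 0 ≤ B) :
    .ofReal ((∫ z, max z 0 ∂l) / 2) * ν (Icc (B - (∫ z, max z 0 ∂l) / 2) B) ≤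
      .ofReal ((∫ z, exp (η * |z|) ∂l) / η + K) * ∫⁻ y in Iic B, .ofReal (exp (-η * h y)) ∂ν := by
  set κ := (∫ z, max z 0 ∂l) / 2
  set C := (∫ z, exp (η * |z|) ∂l) / η + K
  have hfinite : ∫⁻ y in Iic B, .ofReal (ramp B y) ∂ν ≠ ∞ :=
    (setLIntegral_lt_top_of_le_nnreal (hν B).ne
      ⟨B.toNNReal, fun y _ ↦ ENNReal.ofReal_le_ofReal (ramp_le hB y)⟩).ne
  have hsupport : ∫⁻ y in Iic B, .ofReal (ramp B y) ∂ν = ∫⁻ y, .ofReal (ramp B y) ∂ν := by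
    refine setLIntegral_eq_of_support_subset fun y hy ↦ ?_
    by_contra hyB
    exact hy (by simp only [ramp_of_ge hB (not_le.1 hyB).le, ENNReal.ofReal_zero])
  refine (ENNReal.add_le_add_iff_left hfinite).1 ?_
  calc ∫⁻ y in Iic B, .ofReal (ramp B y) ∂ν + .ofReal κ * ν (Icc (B - κ) B)
      = ∫⁻ y in Iic B, (.ofReal (ramp B y) +
          (Icc (B - κ) B).indicator (fun _ ↦ .ofReal κ) y) ∂ν := by
        rw [lintegral_add_left (by fun_prop), lintegral_indicator_const measurableSet_Icc,
          Measure.restrict_apply measurableSet_Icc, inter_eq_left.2 Icc_subset_Iic_self]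
    _ ≤ ∫⁻ y in Iic B, (.ofReal (∫ z, ramp B (h y + z) ∂l) +
          .ofReal C * .ofReal (exp (-η * h y))) ∂ν :=
        setLIntegral_mono' measurableSet_Iic fun y hy ↦
          ofReal_ramp_add_indicator_le hη hl hmean hK hB hy (hle y) (hge y)
    _ = ∫⁻ y in Iic B, .ofReal (∫ z, ramp B (h y + z) ∂l) ∂ν +
          .ofReal C * ∫⁻ y in Iic B, .ofReal (exp (-η * h y)) ∂ν := by
        rw [lintegral_add_right _ (by fun_prop), lintegral_const_mul _ (by fun_prop)]
    _ ≤ _ := by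
        rw [hsupport, lintegral_ramp_eq hB hh hinv]
        gcongr
        exact Measure.restrict_le_self

theorem setLIntegral_exp_neg_lt_top (hη : 0 ≤ η) (hle : ∀ y, 0 ≤ h y)
    (hν : ∀ x, ν (Iic x) < ∞) (B : ℝ) : ∫⁻ y in Iic B, .ofReal (exp (-η * h y)) ∂ν < ∞ := by
  refine setLIntegral_lt_top_of_le_nnreal (hν B).ne ⟨1, fun y _ ↦ ?_⟩
  rw [ENNReal.coe_one, ENNReal.ofReal_le_one, exp_le_one_iff]
  linarith [mul_nonneg hη (hle y)]

theorem setLIntegral_exp_neg_Ioc_le (hη : 0 ≤ η) (hle : ∀ y, y ≤ h y) (a b : ℝ) :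
    ∫⁻ y in Ioc a b, .ofReal (exp (-η * h y)) ∂ν ≤
      .ofReal (exp (-η * a)) * ν (Ioc a b) := by
  rw [← setLIntegral_const]
  refine setLIntegral_mono' measurableSet_Ioc fun y hy ↦ ENNReal.ofReal_le_ofReal ?_
  exact exp_le_exp.2 (by linarith [mul_le_mul_of_nonneg_left (hy.1.le.trans (hle y)) hη])

theorem mul_setLIntegral_exp_neg_Iic_le (hη : 0 < η)
    (hl : Integrable (fun z ↦ exp (η * |z|)) l) (hmean : ∫ z, z ∂l = 0) (hK : 0 ≤ K)
    (hh : Measurable h) (hle : ∀ y, max y 0 ≤ h y)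
    (hge : ∀ y, h y ≤ max y 0 + K * exp (-η * h y)) (hinv : ν.map h ∗ l = ν)
    (hν : ∀ x, ν (Iic x) < ∞) (hB : 0 ≤ B) :
    .ofReal ((∫ z, max z 0 ∂l) / 2) * ∫⁻ y in Iic B, .ofReal (exp (-η * h y)) ∂ν ≤
      .ofReal ((∫ z, max z 0 ∂l) / 2) *
          ∫⁻ y in Iic (B - (∫ z, max z 0 ∂l) / 2), .ofReal (exp (-η * h y)) ∂ν +
        .ofReal (exp (-η * (B - (∫ z, max z 0 ∂l) / 2))) *
          (.ofReal ((∫ z, exp (η * |z|) ∂l) / η + K) *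
            ∫⁻ y in Iic B, .ofReal (exp (-η * h y)) ∂ν) := by
  have hmass := mul_measure_Icc_le_setLIntegral hη hl hmean hK hh hle hge hinv hν hB
  set κ := (∫ z, max z 0 ∂l) / 2
  have hκ : 0 ≤ κ := by positivity
  nth_rw 1 [← Iic_union_Ioc_eq_Iic (sub_le_self B hκ)]
  rw [lintegral_union measurableSet_Ioc (Iic_disjoint_Ioc le_rfl), mul_add]
  refine add_le_add le_rfl ?_
  calc .ofReal κ * ∫⁻ y in Ioc (B - κ) B, .ofReal (exp (-η * h y)) ∂ν
      ≤ .ofReal κ * (.ofReal (exp (-η * (B - κ))) * ν (Icc (B - κ) B)) := by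
        gcongr
        refine (setLIntegral_exp_neg_Ioc_le hη.le
          (fun y ↦ (le_max_left y 0).trans (hle y)) _ _).trans ?_
        gcongr
        exact Ioc_subset_Icc_self
    _ = .ofReal (exp (-η * (B - κ))) * (.ofReal κ * ν (Icc (B - κ) B)) := mul_left_comm _ _ _
    _ ≤ _ := by gcongr

theorem exists_setLIntegral_exp_neg_Iic_le [NullSingletonClass l] (hη : 0 < η)
    (hl : Integrable (fun z ↦ exp (η * |z|)) l) (hmean : ∫ z, z ∂l = 0) (hK : 0 ≤ K)
    (hh : Measurable h) (hle : ∀ y, max y 0 ≤ h y)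
    (hge : ∀ y, h y ≤ max y 0 + K * exp (-η * h y)) (hinv : ν.map h ∗ l = ν)
    (hν : ∀ x, ν (Iic x) < ∞) :
    ∃ κ > 0, ∃ C ≥ 0, ∀ B ≥ 0,
      (∫⁻ y in Iic B, .ofReal (exp (-η * h y)) ∂ν).toReal -
        (∫⁻ y in Iic (B - κ), .ofReal (exp (-η * h y)) ∂ν).toReal ≤
      C * exp (-η * B) * (∫⁻ y in Iic B, .ofReal (exp (-η * h y)) ∂ν).toReal := by
  have hlid := integrable_of_integrable_exp_mul_abs hη hl
  have hκ : 0 < (∫ z, max z 0 ∂l) / 2 := half_pos (integral_max_zero_pos hlid hmean)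
  have hstep (B : ℝ) (hB : 0 ≤ B) :=
    mul_setLIntegral_exp_neg_Iic_le hη hl hmean hK hh hle hge hinv hν hB
  set κ := (∫ z, max z 0 ∂l) / 2
  set C := (∫ z, exp (η * |z|) ∂l) / η + K
  have hC : 0 ≤ C := by positivity
  have hT (B : ℝ) : ∫⁻ y in Iic B, ENNReal.ofReal (exp (-η * h y)) ∂ν ≠ ∞ :=
    (setLIntegral_exp_neg_lt_top hη.le (fun y ↦ (le_max_right y 0).trans (hle y)) hν B).ne
  refine ⟨κ, hκ, exp (η * κ) * C / κ, by positivity, fun B hB ↦ ?_⟩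
  have hreal := ENNReal.toReal_mono (ENNReal.add_ne_top.2
    ⟨ENNReal.mul_ne_top ENNReal.ofReal_ne_top (hT _), ENNReal.mul_ne_top ENNReal.ofReal_ne_top
      (ENNReal.mul_ne_top ENNReal.ofReal_ne_top (hT _))⟩) (hstep B hB)
  rw [ENNReal.toReal_add (ENNReal.mul_ne_top ENNReal.ofReal_ne_top (hT _))
    (ENNReal.mul_ne_top ENNReal.ofReal_ne_top (ENNReal.mul_ne_top ENNReal.ofReal_ne_top (hT _)))]
    at hreal
  simp only [ENNReal.toReal_mul, ENNReal.toReal_ofReal hκ.le, ENNReal.toReal_ofReal hC,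
    ENNReal.toReal_ofReal (exp_nonneg _)] at hreal
  have hexp : exp (-η * (B - κ)) = exp (η * κ) * exp (-η * B) := by
    rw [← exp_add]
    ring_nf
  rw [hexp] at hreal
  refine le_of_mul_le_mul_left ?_ hκ
  calc _ ≤ exp (η * κ) * exp (-η * B) * (C *
        (∫⁻ y in Iic B, ENNReal.ofReal (exp (-η * h y)) ∂ν).toReal) := by linarith
    _ = _ := by field_simp

theorem lintegral_lt_top_of_bddAbove_setLIntegral_Iic {g : ℝ → ℝ≥0∞} {u : ℕ → ℝ}
    (hg_meas : Measurable g) (hu : Tendsto u atTop atTop) (hg : ∀ x, ∫⁻ y in Iic x, g y ∂ν ≠ ∞)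
    (hbdd : BddAbove (range fun n ↦ (∫⁻ y in Iic (u n), g y ∂ν).toReal)) :
    ∫⁻ y, g y ∂ν < ∞ := by
  obtain ⟨S, hS⟩ := hbdd
  refine (le_of_tendsto' ((aecover_Iic hu).lintegral_tendsto_of_countably_generated
    hg_meas.aemeasurable) fun n ↦ ?_).trans_lt (ENNReal.ofReal_lt_top (r := S))
  have hn := hS (mem_range_self n)
  exact (ENNReal.le_ofReal_iff_toReal_le (hg _) (ENNReal.toReal_nonneg.trans hn)).2 hn

theorem lintegral_exp_neg_lt_top [NullSingletonClass l] (hη : 0 < η)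
    (hl : Integrable (fun z ↦ exp (η * |z|)) l) (hmean : ∫ z, z ∂l = 0) (hK : 0 ≤ K)
    (hh : Measurable h) (hle : ∀ y, max y 0 ≤ h y)
    (hge : ∀ y, h y ≤ max y 0 + K * exp (-η * h y)) (hinv : ν.map h ∗ l = ν)
    (hν : ∀ x, ν (Iic x) < ∞) : ∫⁻ y, .ofReal (exp (-η * h y)) ∂ν < ∞ := by
  have hT (B : ℝ) : ∫⁻ y in Iic B, ENNReal.ofReal (exp (-η * h y)) ∂ν ≠ ∞ :=
    (setLIntegral_exp_neg_lt_top hη.le (fun y ↦ (le_max_right y 0).trans (hle y)) hν B).ne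
  obtain ⟨κ, hκ, C, hC, hstep⟩ :=
    exists_setLIntegral_exp_neg_Iic_le hη hl hmean hK hh hle hge hinv hν
  have hκmono : Monotone fun n : ℕ ↦ n * κ := fun m n hmn ↦
    mul_le_mul_of_nonneg_right (Nat.cast_le.2 hmn) hκ.le
  refine lintegral_lt_top_of_bddAbove_setLIntegral_Iic (by fun_prop)
    (tendsto_natCast_atTop_atTop.atTop_mul_const hκ) hT ?_
  refine bddAbove_range_of_sub_le_summable_mul (a := fun n ↦ C * exp (-η * κ) ^ (n + 1))
    (fun m n hmn ↦ ENNReal.toReal_mono (hT _) (lintegral_mono_set (Iic_subset_Iic.2 (hκmono hmn))))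
    (fun n ↦ ENNReal.toReal_nonneg) (fun n ↦ by positivity) ?_ fun n ↦ ?_
  · have hlt : exp (-η * κ) < 1 := exp_lt_one_iff.2 (by nlinarith)
    exact ((summable_nat_add_iff 1).2 (summable_geometric_of_lt_one (exp_nonneg _) hlt)).mul_left C
  · have hpow : exp (-η * κ) ^ (n + 1) = exp (-η * ((n + 1 : ℕ) * κ)) := by
      rw [← exp_nat_mul]
      ring_nf
    have hpred : (n * κ : ℝ) = (n + 1 : ℕ) * κ - κ := by
      push_cast
      ring
    rw [hpow, hpred]
    exact hstep _ (by positivity)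

end ExponentialMoment

section CumulativeAsymptotics

variable {l ν : Measure ℝ} {M : ℝ≥0∞} {c d η K : ℝ} {h : ℝ → ℝ}

theorem measureReal_Iic_sub_map_nonneg (hh : Measurable h) (hle : ∀ y, y ≤ h y)
    (hν : ∀ x, ν (Iic x) < ∞) (t : ℝ) : 0 ≤ ν.real (Iic t) - (ν.map h).real (Iic t) := by
  rw [map_measureReal_apply hh measurableSet_Iic]
  exact sub_nonneg.2 (measureReal_mono (fun y hy ↦ (hle y).trans hy) (hν t).ne)

theorem measureReal_Iic_sub_map_le (hc : 0 ≤ c) (hK : 0 ≤ K) (hh : Measurable h)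
    (hle : ∀ y, y ≤ h y) (hge : ∀ y, h y ≤ max y 0 + K * exp (-c * h y))
    (hν : ∀ x, ν (Iic x) < ∞) {t : ℝ} (ht : K ≤ t) :
    ν.real (Iic t) - (ν.map h).real (Iic t) ≤ ν.real (Ioc (t - K * exp (-c * t)) t) := by
  have hexp : K * exp (-c * t) ≤ t :=
    (mul_le_of_le_one_right hK (exp_le_one_iff.2 (by nlinarith))).trans ht
  have hcover : Iic t ⊆ h ⁻¹' Iic t ∪ Ioc (t - K * exp (-c * t)) t := by
    intro y hy
    refine or_iff_not_imp_left.2 fun hyt ↦ ⟨?_, hy⟩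
    rw [mem_preimage, mem_Iic, not_le] at hyt
    have hlt : t - K * exp (-c * t) < max y 0 := by
      have : K * exp (-c * h y) ≤ K * exp (-c * t) :=
        mul_le_mul_of_nonneg_left (exp_le_exp.2 (by nlinarith)) hK
      linarith [hge y]
    exact (lt_max_iff.1 hlt).resolve_right (by linarith)
  have hfinite : ν (h ⁻¹' Iic t ∪ Ioc (t - K * exp (-c * t)) t) ≠ ∞ :=
    measure_ne_top_of_subset (union_subset (fun y hy ↦ (hle y).trans hy) Ioc_subset_Iic_self)
      (hν t).ne
  rw [map_measureReal_apply hh measurableSet_Iic, sub_le_iff_le_add']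
  exact (measureReal_mono hcover hfinite).trans (measureReal_union_le _ _)

theorem measureReal_Iic_sub_map_isBigO [SFinite l] (hM : M ≠ ∞) (hlM : l ≤ M • volume)
    (hη : 0 ≤ η) (hηc : 4 * η ≤ c) (hl : ∫⁻ z, .ofReal (exp (-(2 * η) * z)) ∂l ≠ ∞) (hK : 0 ≤ K)
    (hh : Measurable h) (hle : ∀ y, y ≤ h y) (hge : ∀ y, h y ≤ max y 0 + K * exp (-c * h y))
    (hinv : ν.map h ∗ l = ν) (hν : ∀ x, ν (Iic x) < ∞)
    (hνexp : ∫⁻ y, .ofReal (exp (-η * h y)) ∂ν ≠ ∞) :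
    (fun t ↦ ν.real (Iic t) - (ν.map h).real (Iic t)) =O[⊤] fun t ↦ exp (-η * t) := by
  obtain ⟨C, hC, hIoc⟩ := exists_conv_real_Ioc_le (μ := ν.map h) hM hlM hη hl
    (by rwa [lintegral_map (by fun_prop) hh])
  rw [hinv] at hIoc
  refine isBigO_top_exp_iff.2 ⟨C * √K + ν.real (Iic K) * exp (η * K), by positivity, fun t ↦ ?_⟩
  rw [abs_of_nonneg (measureReal_Iic_sub_map_nonneg hh hle hν t), add_mul]
  rcases le_total K t with ht | ht
  · have hsqrt : √(K * exp (-c * t)) = √K * exp (-c * t / 2) := by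
      rw [sqrt_mul hK, ← exp_half]
    calc ν.real (Iic t) - (ν.map h).real (Iic t)
        ≤ ν.real (Ioc (t - K * exp (-c * t)) t) :=
          measureReal_Iic_sub_map_le (by linarith) hK hh hle hge hν ht
      _ ≤ C * √K * (exp (-c * t / 2) * exp (η * t)) := by
          refine (hIoc _ _).trans_eq ?_
          rw [sub_sub_cancel, hsqrt]
          ring
      _ ≤ C * √K * exp (-η * t) := by
          rw [← exp_add]
          gcongr
          nlinarith
      _ ≤ _ := le_add_of_nonneg_right (by positivity)
  · calc ν.real (Iic t) - (ν.map h).real (Iic t) ≤ ν.real (Iic t) :=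
          sub_le_self _ measureReal_nonneg
      _ ≤ ν.real (Iic K) * (exp (η * K) * exp (-η * t)) := by
          rw [← exp_add]
          refine (measureReal_mono (Iic_subset_Iic.2 ht) (hν K).ne).trans
            (le_mul_of_one_le_right measureReal_nonneg (one_le_exp ?_))
          nlinarith
      _ ≤ _ := by
          rw [← mul_assoc]
          exact le_add_of_nonneg_left (by positivity)

theorem pos_of_measureReal_Iic_sub_isBigO_exp_neg (hν : ∀ x, ν (Iic x) < ∞) (hν_top : ν univ = ∞)
    {m a : ℝ} (hη : 0 < η)
    (h : (fun x ↦ ν.real (Iic x) - (m * x + a)) =O[atTop] fun x ↦ exp (-η * x)) : 0 < m := by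
  by_contra! hm
  obtain ⟨C, hC⟩ := h.bound
  have hbound : ∀ᶠ x in atTop, ν (Iic x) ≤ .ofReal (a + |C|) := by
    filter_upwards [hC, eventually_ge_atTop 0] with x hx hx0
    have hexp : C * exp (-η * x) ≤ |C| :=
      (mul_le_mul_of_nonneg_right (le_abs_self C) (exp_nonneg _)).trans
        (mul_le_of_le_one_right (abs_nonneg C) (exp_le_one_iff.2 (by nlinarith)))
    rw [norm_eq_abs, norm_eq_abs, abs_exp] at hx
    rw [← ofReal_measureReal (hν x).ne]
    exact ENNReal.ofReal_le_ofReal (by nlinarith [le_of_abs_le hx])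
  refine ENNReal.ofReal_ne_top (r := a + |C|) (top_le_iff.1 ?_)
  exact hν_top ▸ le_of_tendsto (tendsto_measure_Iic_atTop ν) hbound

theorem measure_map_Iic_lt_top (hh : Measurable h) (hle : ∀ y, y ≤ h y)
    (hν : ∀ x, ν (Iic x) < ∞) (t : ℝ) : ν.map h (Iic t) < ∞ := by
  rw [Measure.map_apply hh measurableSet_Iic]
  exact (measure_mono fun y hy ↦ (hle y).trans hy).trans_lt (hν t)

theorem measConv_measureReal_Iic_sub [SFinite l] (hd : 0 ≤ d)
    (hl : Integrable (fun z ↦ exp (d * |z|)) l) (hh : Measurable h) (hle : ∀ y, y ≤ h y)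
    (hinv : ν.map h ∗ l = ν) (hν : ∀ x, ν (Iic x) < ∞)
    (hνd : (fun x ↦ ν.real (Iic x)) =O[⊤] fun x ↦ exp (d * |x|)) (x : ℝ) :
    measConv l (fun t ↦ ν.real (Iic t)) x - ν.real (Iic x) =
      measConv l (fun t ↦ ν.real (Iic t) - (ν.map h).real (Iic t)) x := by
  have hμ := measure_map_Iic_lt_top hh hle hν
  have hμν (t : ℝ) : ‖(ν.map h).real (Iic t)‖ ≤ ‖ν.real (Iic t)‖ := by
    rw [norm_of_nonneg measureReal_nonneg, norm_of_nonneg measureReal_nonneg]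
    exact sub_nonneg.1 (measureReal_Iic_sub_map_nonneg hh hle hν t)
  have hμd : (fun t ↦ (ν.map h).real (Iic t)) =O[⊤] fun x ↦ exp (d * |x|) :=
    (isBigO_of_le ⊤ hμν).trans hνd
  conv_lhs => rw [← hinv, ← measConv_measureReal_Iic hμ, hinv]
  exact (integral_sub (integrable_comp_sub hd (measurable_measureReal_Iic hν) hνd hl x)
    (integrable_comp_sub hd (measurable_measureReal_Iic hμ) hμd hl x)).symm

theorem lintegral_exp_mul_lt_top {a : ℝ} (had : |a| ≤ d)
    (hl : Integrable (fun z ↦ exp (d * |z|)) l) : ∫⁻ z, .ofReal (exp (a * z)) ∂l < ∞ := by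
  refine (lintegral_mono fun z ↦ ENNReal.ofReal_le_ofReal (exp_le_exp.2 ?_)).trans_lt
    hl.lintegral_lt_top
  calc a * z ≤ |a| * |z| := by rw [← abs_mul]; exact le_abs_self _
    _ ≤ d * |z| := by gcongr

theorem measureReal_Iic_isBigO_exp_mul_abs [SFinite l] (hη : 0 ≤ η) (hηd : η ≤ d)
    (hl : Integrable (fun z ↦ exp (d * |z|)) l) (hh : Measurable h) (hinv : ν.map h ∗ l = ν)
    (hνexp : ∫⁻ y, .ofReal (exp (-η * h y)) ∂ν ≠ ∞) :
    (fun x ↦ ν.real (Iic x)) =O[⊤] fun x ↦ exp (η * |x|) := by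
  have hνη : ∫⁻ t, .ofReal (exp (-η * t)) ∂ν ≠ ∞ := by
    rw [← hinv, lintegral_exp_conv, lintegral_map (by fun_prop) hh]
    exact ENNReal.mul_ne_top hνexp
      (lintegral_exp_mul_lt_top (by rwa [abs_neg, abs_of_nonneg hη]) hl).ne
  refine (measureReal_Iic_isBigO_exp hη hνη).trans
    (isBigO_top_exp_iff.2 ⟨1, zero_le_one, fun x ↦ ?_⟩)
  rw [abs_exp, one_mul]
  gcongr
  exact le_abs_self x

theorem exists_measureReal_Iic_sub_affine_isBigO [IsProbabilityMeasure l] (hM : M ≠ ∞)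
    (hlM : l ≤ M • volume) (hmean : ∫ z, z ∂l = 0) (hd : 0 < d)
    (hl : Integrable (fun z ↦ exp (d * |z|)) l) (hc : 0 < c) (hK : 0 ≤ K) (hh : Measurable h)
    (hle : ∀ y, max y 0 ≤ h y) (hge : ∀ y, h y ≤ max y 0 + K * exp (-c * h y))
    (hinv : ν.map h ∗ l = ν) (hν : ∀ x, ν (Iic x) < ∞) (hν_top : ν univ = ∞) :
    ∃ m > 0, ∃ a, ∃ η > 0, η < 1 ∧
      (fun x ↦ ν.real (Iic x) - (m * x + a)) =O[atTop] fun x ↦ exp (-η * x) := by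
  have hh_ge (y : ℝ) : y ≤ h y := (le_max_left y 0).trans (hle y)
  have hl_ac : l ≪ volume := Measure.absolutelyContinuous_of_le_smul hlM
  have : NullSingletonClass l := nullSingletonClass_of_absolutelyContinuous hl_ac
  have : NullSingletonClass ν := nullSingletonClass_of_absolutelyContinuous
    (hinv ▸ Measure.conv_absolutelyContinuous hl_ac)
  set ρ := min c d / 4 with hρ_def
  have hρ : 0 < ρ := by positivity
  have hρc : 4 * ρ ≤ c := by linarith [min_le_left c d]
  have hρd : 4 * ρ ≤ d := by linarith [min_le_right c d]
  obtain ⟨b, hb, hrenewal⟩ := exists_affine_sub_isBigO_of_measConv_sub hM hlM hmean hd hl hρ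
  have hexp {η : ℝ} (hη : 0 < η) (hηρ : η ≤ ρ) : ∫⁻ y, .ofReal (exp (-η * h y)) ∂ν ≠ ∞ := by
    refine (lintegral_exp_neg_lt_top (K := K) hη
      (integrable_exp_mul_abs_of_le (by linarith) hl) hmean hK hh hle (fun y ↦ ?_) hinv hν).ne
    have hhy : 0 ≤ h y := (le_max_right y 0).trans (hle y)
    refine (hge y).trans ?_
    gcongr
    linarith
  have hgrowth : (fun x ↦ ν.real (Iic x)) =O[⊤] fun x ↦ exp (min ρ b * |x|) :=
    measureReal_Iic_isBigO_exp_mul_abs (d := d) (by positivity) (by linarith [min_le_left ρ b]) hl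
      hh hinv (hexp (by positivity) (min_le_left _ _))
  have hρl : Integrable (fun z ↦ exp (ρ * |z|)) l := integrable_exp_mul_abs_of_le (by linarith) hl
  have hdefect := measConv_isBigO_exp_neg hρ.le hρl <| measureReal_Iic_sub_map_isBigO hM hlM hρ.le
    hρc (lintegral_exp_mul_lt_top (by rw [abs_neg, abs_of_pos] <;> linarith) hl).ne hK hh hh_ge
    hge hinv hν (hexp hρ le_rfl)
  obtain ⟨m, a, η, hη, hη1, h_asymp⟩ := hrenewal _ (continuous_measureReal_Iic hν)
    (hgrowth.trans (isBigO_top_exp_mul_abs_of_le (min_le_right _ _)))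
    (hdefect.congr_left fun x ↦ (measConv_measureReal_Iic_sub hρ.le hρl hh hh_ge hinv hν
      (hgrowth.trans (isBigO_top_exp_mul_abs_of_le (min_le_left _ _))) x).symm)
  exact ⟨m, pos_of_measureReal_Iic_sub_isBigO_exp_neg hν hν_top hη h_asymp, a, η, hη, hη1, h_asymp⟩

end CumulativeAsymptotics

section ExponentialTail

theorem integrable_exp_mul_of_tail {α : Type*} [MeasurableSpace α] {μ : Measure α}
    [IsFiniteMeasure μ] {X : α → ℝ} {b C δ : ℝ} (hX : Measurable X) (hX0 : ∀ a, 0 ≤ X a)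
    (hb : 0 ≤ b) (hbδ : b < δ) (htail : ∀ t, 0 ≤ t → μ.real {a | t < X a} ≤ C * exp (-δ * t)) :
    Integrable (fun a ↦ exp (b * X a)) μ := by
  have hprimitive (a : α) : exp (b * X a) - 1 = ∫ t in 0..X a, b * exp (b * t) := by
    rw [intervalIntegral.integral_const_mul, intervalIntegral.mul_integral_comp_mul_left,
      integral_exp, mul_zero, exp_zero]
  have hnonneg (a : α) : 0 ≤ exp (b * X a) - 1 :=
    sub_nonneg.2 (one_le_exp (mul_nonneg hb (hX0 a)))
  have hexp : IntegrableOn (fun t ↦ C * b * exp ((b - δ) * t)) (Ioi 0) :=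
    (integrableOn_exp_mul_Ioi (by linarith) 0).const_mul _
  have hlintegral : ∫⁻ a, .ofReal (exp (b * X a) - 1) ∂μ < ∞ := by
    simp only [hprimitive]
    rw [lintegral_comp_eq_lintegral_meas_lt_mul μ (ae_of_all _ hX0) hX.aemeasurable
      (fun t _ ↦ Continuous.intervalIntegrable (by fun_prop) _ _)
      (ae_of_all _ fun t ↦ by positivity)]
    refine (setLIntegral_mono' measurableSet_Ioi fun t ht ↦ ?_).trans_lt hexp.lintegral_lt_top
    rw [← ofReal_measureReal, ← ENNReal.ofReal_mul measureReal_nonneg]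
    refine ENNReal.ofReal_le_ofReal ?_
    calc μ.real {a | t < X a} * (b * exp (b * t))
        ≤ C * exp (-δ * t) * (b * exp (b * t)) := by
          gcongr
          exact htail t (mem_Ioi.1 ht).le
      _ = C * b * (exp (-δ * t) * exp (b * t)) := by ring
      _ = C * b * exp ((b - δ) * t) := by rw [← exp_add]; ring_nf
  have hint : Integrable (fun a ↦ exp (b * X a) - 1) μ :=
    (lintegral_ofReal_ne_top_iff_integrable (by fun_prop) (ae_of_all _ hnonneg)).1 hlintegral.ne
  simpa using hint.fun_add (integrable_const 1)

end ExponentialTail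

section Density

variable {α : Type*} [MeasurableSpace α] {μ : Measure α} {f : α → ℝ}

theorem isProbabilityMeasure_withDensity_ofReal (hf0 : ∀ x, 0 ≤ f x) (hf : ∫ x, f x ∂μ = 1) :
    IsProbabilityMeasure (μ.withDensity fun x ↦ .ofReal (f x)) := by
  have hint : Integrable f μ := Integrable.of_integral_ne_zero (by rw [hf]; exact one_ne_zero)
  refine ⟨?_⟩
  rw [withDensity_apply _ .univ, setLIntegral_univ,
    ← ofReal_integral_eq_lintegral_ofReal hint (ae_of_all _ hf0), hf, ENNReal.ofReal_one]

theorem integral_withDensity_ofReal (hf : Measurable f) (hf0 : ∀ x, 0 ≤ f x) (g : α → ℝ) :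
    ∫ x, g x ∂(μ.withDensity fun x ↦ .ofReal (f x)) = ∫ x, f x * g x ∂μ := by
  simp [integral_withDensity_eq_integral_toReal_smul (μ := μ) hf.ennreal_ofReal
    (ae_of_all _ fun _ ↦ ENNReal.ofReal_lt_top), hf0]

theorem measureReal_withDensity_ofReal (hf : Measurable f) (hf0 : ∀ x, 0 ≤ f x) {s : Set α}
    (hs : MeasurableSet s) : (μ.withDensity fun x ↦ .ofReal (f x)).real s = ∫ x in s, f x ∂μ := by
  rw [Measure.real, withDensity_apply _ hs,
    integral_eq_lintegral_of_nonneg_ae (ae_of_all _ hf0) hf.aestronglyMeasurable]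

theorem withDensity_ofReal_le_smul {M : ℝ} (hfM : ∀ x, f x ≤ M) :
    μ.withDensity (fun x ↦ .ofReal (f x)) ≤ ENNReal.ofReal M • μ := by
  rw [← withDensity_const]
  exact withDensity_mono (ae_of_all _ fun x ↦ ENNReal.ofReal_le_ofReal (hfM x))

theorem le_integral_add_of_abs_sub_le {f : ℝ → ℝ} {C : ℝ} (hf : Integrable f) (hf0 : ∀ x, 0 ≤ f x)
    (hC : ∀ x y, |x - y| ≤ 1 → |f x - f y| ≤ C) (x : ℝ) : f x ≤ (∫ y, f y) + C := by
  have hlocal : ∫ _ in x..x + 1, (f x - C) ≤ ∫ y in x..x + 1, f y := by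
    refine intervalIntegral.integral_mono_on (by linarith) (by simp) hf.intervalIntegrable
      fun y hy ↦ ?_
    have hxy : |x - y| ≤ 1 := abs_le.2 ⟨by linarith [hy.2], by linarith [hy.1]⟩
    linarith [le_of_abs_le (hC x y hxy)]
  have hglobal : ∫ y in x..x + 1, f y ≤ ∫ y, f y := by
    rw [intervalIntegral.integral_of_le (by linarith)]
    exact setIntegral_le_integral hf (ae_of_all _ hf0)
  simp only [intervalIntegral.integral_const, add_sub_cancel_left, one_smul] at hlocal
  linarith

theorem le_one_add_of_holder {f : ℝ → ℝ} {C θ : ℝ} (hf0 : ∀ x, 0 ≤ f x) (hf : ∫ x, f x = 1)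
    (hθ : 0 < θ) (hC : ∀ x y, |f x - f y| ≤ C * |x - y| ^ θ) (x : ℝ) : f x ≤ 1 + |C| := by
  have hint : Integrable f := Integrable.of_integral_ne_zero (by rw [hf]; exact one_ne_zero)
  rw [← hf]
  refine le_integral_add_of_abs_sub_le hint hf0 (fun x y hxy ↦ (hC x y).trans ?_) x
  exact (mul_le_mul_of_nonneg_right (le_abs_self C) (by positivity)).trans
    (mul_le_of_le_one_right (abs_nonneg C) (rpow_le_one (abs_nonneg _) hxy hθ.le))

end Density

section SoftplusChain

theorem hY_eq_log (y : ℝ) : hY y = log (1 + exp y) := by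
  have hfactor : 1 + exp y = exp y * (1 + exp (-y)) := by
    rw [mul_add, ← exp_add, add_neg_cancel, exp_zero]
    ring
  rw [hfactor, log_mul (exp_ne_zero y) (by positivity), log_exp, hY]

theorem exp_hY (y : ℝ) : exp (hY y) = 1 + exp y := by
  rw [hY_eq_log, exp_log (by positivity)]

theorem measurable_hY : Measurable hY := by
  unfold hY
  fun_prop

theorem max_zero_le_hY (y : ℝ) : max y 0 ≤ hY y := by
  rw [max_le_iff, ← exp_le_exp, ← exp_le_exp (y := hY y), exp_hY, exp_zero]
  exact ⟨by linarith, by linarith [exp_pos y]⟩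

theorem hY_sub_max_zero_le (y : ℝ) : hY y - max y 0 ≤ exp (-|y|) := by
  rcases le_total 0 y with hy | hy
  · rw [max_eq_left hy, abs_of_nonneg hy, hY]
    linarith [log_le_sub_one_of_pos (x := 1 + exp (-y)) (by positivity)]
  · rw [max_eq_right hy, abs_of_nonpos hy, neg_neg, hY_eq_log]
    linarith [log_le_sub_one_of_pos (x := 1 + exp y) (by positivity)]

theorem hY_le_max_zero_add (y : ℝ) : hY y ≤ max y 0 + 2 * exp (-hY y) := by
  have hexp : exp (-|y|) * exp (hY y) ≤ 2 := by
    rw [exp_hY, mul_add, ← exp_add, mul_one]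
    linarith [exp_le_one_iff.2 (neg_nonpos.2 (abs_nonneg y)),
      exp_le_one_iff.2 (show -|y| + y ≤ 0 by linarith [le_abs_self y])]
  have : exp (-|y|) ≤ 2 * exp (-hY y) := by
    rwa [exp_neg (hY y), ← div_eq_mul_inv, le_div_iff₀ (exp_pos _)]
  linarith [hY_sub_max_zero_le y]

theorem IsInvariantY.map_conv_eq {ζ : ℝ → ℝ} {ν : Measure ℝ} (hζ : Measurable ζ)
    (hinv : IsInvariantY ζ ν) :
    ν.map hY ∗ volume.withDensity (fun x ↦ .ofReal (ζ x)) = ν := by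
  refine Measure.ext_of_lintegral _ fun g hg ↦ ?_
  rw [lintegral_map_conv measurable_hY hg, hinv g hg]
  refine lintegral_congr fun y ↦ ?_
  rw [lintegral_withDensity_eq_lintegral_mul _ hζ.ennreal_ofReal (by fun_prop)]
  exact lintegral_congr fun z ↦ by rw [Pi.mul_apply, mul_comm, add_comm]

theorem stmt7_general {ζ : ℝ → ℝ} (hζmeas : Measurable ζ) (hζnn : ∀ x, 0 ≤ ζ x)
    (hζprob : ∫ x, ζ x = 1) {M : ℝ} (hζM : ∀ x, ζ x ≤ M) (hmean : ∫ x, x * ζ x = 0)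
    {δ : ℝ} (hδ : 0 < δ) {Cδ : ℝ}
    (htail : ∀ x : ℝ, 0 ≤ x → ∫ y in {y : ℝ | x < |y|}, ζ y ≤ Cδ * exp (-δ * x))
    {ν : Measure ℝ} (hinv : IsInvariantY ζ ν) (hfin : ∀ x, ν (Iic x) < ∞)
    (hinfty : ν univ = ∞) :
    ∃ m : ℝ, 0 < m ∧ ∃ cζ : ℝ, ∃ ρ : ℝ, 0 < ρ ∧ ρ < 1 ∧ ∃ C > 0, ∃ x₁ : ℝ,
      ∀ x ≥ x₁, |(ν (Iic x)).toReal - (m * x + cζ)| ≤ C * exp (-ρ * x) := by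
  set l := volume.withDensity fun x ↦ ENNReal.ofReal (ζ x)
  have : IsProbabilityMeasure l := isProbabilityMeasure_withDensity_ofReal hζnn hζprob
  have hlmean : ∫ z, z ∂l = 0 := by
    simpa only [l, integral_withDensity_ofReal hζmeas hζnn, mul_comm] using hmean
  have hltail (x : ℝ) (hx : 0 ≤ x) : l.real {y | x < |y|} ≤ Cδ * exp (-δ * x) := by
    rw [measureReal_withDensity_ofReal hζmeas hζnn (by measurability)]
    exact htail x hx
  have hl : Integrable (fun z ↦ exp (δ / 2 * |z|)) l :=
    integrable_exp_mul_of_tail (by fun_prop) abs_nonneg (by positivity) (half_lt_self hδ) hltail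
  obtain ⟨m, hm, a, η, hη, hη1, hasymp⟩ := exists_measureReal_Iic_sub_affine_isBigO
    ENNReal.ofReal_ne_top (withDensity_ofReal_le_smul hζM) hlmean (half_pos hδ) hl one_pos
    zero_le_two measurable_hY max_zero_le_hY (fun y ↦ by simpa using hY_le_max_zero_add y)
    (hinv.map_conv_eq hζmeas) hfin hinfty
  obtain ⟨C, hC, hbound⟩ := hasymp.exists_pos
  obtain ⟨x₁, hx₁⟩ := eventually_atTop.1 hbound.bound
  refine ⟨m, hm, a, η, hη, hη1, C, hC, x₁, fun x hx ↦ ?_⟩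
  simpa [Measure.real] using hx₁ x hx

end SoftplusChain

/-- Proposition: sharp asymptotics at +∞ of the cumulative function of the invariant
measure of the chain Y. -/
theorem stmt7
    (ζ : ℝ → ℝ) (hζmeas : Measurable ζ) (hζnn : ∀ x, 0 ≤ ζ x)
    (hζprob : ∫ x, ζ x = 1)
    (hmean : ∫ x, x * ζ x = 0)
    (δ : ℝ) (hδ : 0 < δ) (Cδ : ℝ)
    (htail : ∀ x : ℝ, 0 ≤ x → ∫ y in {y : ℝ | x < |y|}, ζ y ≤ Cδ * Real.exp (-δ * x))
    (θ : ℝ) (hθ0 : 0 < θ) (hθ1 : θ ≤ 1) (Cθ : ℝ)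
    (hHolder : ∀ x y : ℝ, |ζ x - ζ y| ≤ Cθ * |x - y| ^ θ)
    (ν : Measure ℝ) (hν0 : ν ≠ 0) [SigmaFinite ν]
    (hinv : IsInvariantY ζ ν) (hfin : ∀ x : ℝ, ν (Set.Iic x) < ⊤) (hinfty : ν Set.univ = ⊤)
    (x₀ : ℝ)
    (hx₀supp : ∃ ε > 0, ∀ u v : ℝ, x₀ - ε ≤ u → u < v → v ≤ x₀ + ε → 0 < ν (Set.Ioo u v))
    (hnorm : (ν (Set.Iic x₀)).toReal = 1)
 :
    ∃ m : ℝ, 0 < m ∧ ∃ cζ : ℝ, ∃ ρ : ℝ, 0 < ρ ∧ ρ < 1 ∧ ∃ C > 0, ∃ x₁ : ℝ,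
      ∀ x ≥ x₁, |(ν (Set.Iic x)).toReal - (m * x + cζ)| ≤ C * Real.exp (-ρ * x) := by
  exact stmt7_general hζmeas hζnn hζprob (le_one_add_of_holder hζnn hζprob hθ0 hHolder) hmean hδ
    htail hinv hfin hinfty
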